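/- arXiv:0802.2651 — 4 statements merged into one kernel-verified Lean document; each statement's English description precedes it below -/
import Mathlib

section
/- Let N be a positive squarefree integer and let P be a non-torsion integral point of E_N(ℚ). Then there is at most one integer n > 1 such that nP is integral; that is, if n₁ > 1 and n₂ > 1 are integers such that both n₁P and n₂P are integral points, then n₁ = n₂. -/
/-- The congruent number curve `E_N : y² = x³ - N²x` over `ℚ`. -/
def congruentCurve (N : ℕ) : WeierstrassCurve.Affine ℚ :=
  { a₁ := 0, a₂ := 0, a₃ := 0, a₄ := -(N : ℚ) ^ 2, a₆ := 0 }

/-- A rational point on a Weierstrass curve over `ℚ` is integral if it is an affine point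
whose `x`-coordinate is an integer. -/
def IsIntegralPoint {W : WeierstrassCurve.Affine ℚ} (P : W.Point) : Prop :=
  ∃ (x y : ℚ) (h : W.Nonsingular x y),
    P = WeierstrassCurve.Affine.Point.some x y h ∧ x.den = 1

section PolyPart
open Polynomial

def tauF {R : Type*} [CommRing R] : ℕ → R → R
  | 0, w => w
  | (k+1), w => tauF k w + 2^k * (tauF k w)^2

lemma tauF_pow {R : Type*} [CommRing R] (k : ℕ) (w : R) :
    (1 + 2*w)^(2^k) = 1 + 2^(k+1) * tauF k w := by
  induction k with
  | zero => simp [tauF]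
  | succ k ih =>
    rw [pow_succ, pow_mul, ih, tauF]
    ring

lemma tauF_mul {R : Type*} [CommRing R] [IsDomain R] [CharZero R] (k : ℕ) (w w' w'' : R)
    (h : 1 + 2*w'' = (1+2*w)*(1+2*w')) :
    (2:R)^(k+1) ∣ tauF k w'' - (tauF k w + tauF k w') := by
  refine ⟨tauF k w * tauF k w', ?_⟩
  have h1 := tauF_pow k w''
  rw [h, mul_pow, tauF_pow, tauF_pow] at h1
  have h2 : (2:R)^(k+1) ≠ 0 := pow_ne_zero _ two_ne_zero
  apply mul_left_cancel₀ h2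
  linear_combination -h1

lemma tauF_add {R : Type*} [CommRing R] (k : ℕ) (w d : R) :
    d ∣ tauF k (w+d) - tauF k w := by
  induction k with
  | zero => simp [tauF]
  | succ k ih =>
    obtain ⟨c, hc⟩ := ih
    refine ⟨c * (1 + 2^k * (tauF k (w+d) + tauF k w)), ?_⟩
    simp only [tauF]
    linear_combination (1 + 2^k * (tauF k (w+d) + tauF k w)) * hc

lemma tauF_congr {R : Type*} [CommRing R] (k : ℕ) (w w' m : R) (h : m ∣ w' - w) :
    m ∣ tauF k w' - tauF k w := by
  have := tauF_add k w (w' - w)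
  rw [add_sub_cancel] at this
  exact h.trans this

lemma tauF_even {R : Type*} [CommRing R] (k : ℕ) (w : R) (h : 2 ∣ w) : 2 ∣ tauF k w := by
  induction k with
  | zero => simpa [tauF]
  | succ k ih => exact dvd_add ih ((ih.pow (by norm_num)).mul_left _)

lemma tauF_map {R S : Type*} [CommRing R] [CommRing S] (f : R →+* S) (k : ℕ) (w : R) :
    f (tauF k w) = tauF k (f w) := by
  induction k with
  | zero => rfl
  | succ k ih =>
    have h2 : f 2 = 2 := map_ofNat f 2
    simp [tauF, ih, h2]

/-- expansion -/
lemma tauF_expand (k : ℕ) (c : ℤ) (hc : 2 ∣ c) (d : ℤ[X]) (hd : 2 ∣ d) :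
    ∃ (s : ℤ) (p : ℤ[X]), Odd s ∧ 2 ∣ (tauF (k+1) (C c + d) - tauF (k+1) (C c)) ∧
      tauF (k+1) (C c + d) = C (tauF (k+1) c) + C s * (d + d^2) + 8 * p := by
  induction k with
  | zero =>
    obtain ⟨c', rfl⟩ := hc
    obtain ⟨d', rfl⟩ := hd
    refine ⟨1, C c' * d', odd_one, ?_, ?_⟩
    · exact (dvd_mul_right _ _).trans (tauF_add _ _ _)
    · simp [tauF]; ring
  | succ k ih =>
    obtain ⟨s, p, hs, h2, h⟩ := ih
    have hm : (C (tauF (k+1) c) : ℤ[X]) = tauF (k+1) (C c) := tauF_map C _ _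
    obtain ⟨y, hy⟩ := h2
    set t := tauF (k+1) c with ht
    refine ⟨s * (1 + 2^(k+2) * t), (1 + 2^(k+2) * C t) * p + 2^k * y^2, ?_, ?_, ?_⟩
    · apply hs.mul
      rw [pow_succ]
      exact ⟨2^(k+1)*t, by ring⟩
    · exact hd.trans (tauF_add _ _ _)
    · rw [show tauF (k+1+1) (C c + d) = tauF (k+1) (C c + d) + 2^(k+1) * (tauF (k+1) (C c + d))^2 from rfl, show tauF (k+1+1) c = t + 2^(k+1)*t^2 from rfl]
      rw [← hm] at hy
      have e1 : tauF (k+1) (C c + d) = C t + 2*y := by linear_combination hy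
      have e2 : 2 * y = C s * (d+d^2) + 8*p := by rw [e1] at h; linear_combination h
      rw [e1]
      simp only [map_add, map_mul, map_pow, map_ofNat, map_one]
      linear_combination (1 + 2^(k+2) * C t) * e2

/-- sequences -/
def seqU {R : Type*} [CommRing R] (u w : R) : ℕ → R × R
  | 0 => (u, w)
  | (i+1) => (((seqU u w i).1^2 + (2^(2*i+1) * (seqU u w i).2)^2)^2,
      (seqU u w i).1 * (seqU u w i).2 * ((seqU u w i).1^2 - (2^(2*i+1) * (seqU u w i).2)^2))

lemma seqU_map {R S : Type*} [CommRing R] [CommRing S] (f : R →+* S) (u w : R) (i : ℕ) :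
    seqU (f u) (f w) i = (f (seqU u w i).1, f (seqU u w i).2) := by
  induction i with
  | zero => rfl
  | succ i ih =>
    have h2 : f 2 = 2 := map_ofNat f 2
    simp [seqU, ih, h2]

lemma seqU_odd {R : Type*} [CommRing R] (u w : R) (hu : 2 ∣ u - 1) (i : ℕ) :
    4 ∣ (seqU u w (i+1)).1 - 1 := by
  induction i with
  | zero =>
    obtain ⟨r, hr⟩ := hu
    have : u = 1 + 2*r := by linear_combination hr
    simp only [seqU, this]
    exact ⟨(r+r^2+w^2)*2 + 4*(r+r^2+w^2)^2, by ring⟩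
  | succ i ih =>
    obtain ⟨r, hr⟩ := ih
    have : (seqU u w (i+1)).1 = 1 + 4*r := by linear_combination hr
    rw [seqU, this]
    generalize (seqU u w (i+1)).2 = z
    set t : R := 2^(2*(i+1)) * z with ht
    have : (2:R)^(2*(i+1)+1) * z = 2 * t := by rw [ht]; ring
    rw [this]
    exact ⟨(2*r+4*r^2+t^2)*2 + 4*(2*r+4*r^2+t^2)^2, by ring⟩

lemma seqW_form {R : Type*} [CommRing R] (u w : R) (hu : 2 ∣ u - 1) (i : ℕ) :
    ∃ q, (seqU u w (i+1)).2 = w * (u^3 + 4*q) := by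
  induction i with
  | zero => exact ⟨- u * w^2, by simp [seqU]; ring⟩
  | succ i ih =>
    obtain ⟨q, hq⟩ := ih
    obtain ⟨r, hr⟩ := seqU_odd u w hu i
    have : (seqU u w (i+1)).1 = 1 + 4*r := by linear_combination hr
    rw [seqU, this, hq]
    set t : R := 2^(2*(i+1)) * (w * (u^3+4*q)) with ht
    have : (2:R)^(2*(i+1)+1) * (w * (u^3+4*q)) = 2 * t := by rw [ht]; ring
    rw [this]
    exact ⟨q + (u^3+4*q) * (r + (1+4*r)*(2*r+4*r^2-t^2)), by ring⟩

lemma seqL_form (u w y : ℤ[X]) (hu : 2 ∣ u - 1) (hy : u^2 + (2*w)^2 = 1 + 2*y) (K i : ℕ) :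
    ∃ p r : ℤ[X], (seqU u w (i+1)).1 = 1 + 2*r ∧
      2^(K+1) ∣ tauF K r - 2 * 4^i * (tauF K y + 8 * p) := by
  induction i with
  | zero =>
    refine ⟨0, 2*y + 2*y^2, ?_, ?_⟩
    · simp only [seqU]
      have : u^2 + (2^(2*0+1)*w)^2 = 1 + 2*y := by linear_combination hy
      rw [this]; ring
    · have := tauF_mul K y y (2*y+2*y^2) (by ring)
      convert this using 1; ring
  | succ i ih =>
    obtain ⟨p, r, hr, h⟩ := ih
    set W := (seqU u w (i+1)).2 with hW
    obtain ⟨k, hk⟩ := tauF_add K (2*r+2*r^2) (2^(4*i+5) * W^2)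
    have h1 := tauF_mul K r r (2*r+2*r^2) (by ring)
    set z := 2*r+2*r^2 + 2^(4*i+5) * W^2 with hz
    have h2 := tauF_mul K z z (2*z+2*z^2) (by ring)
    refine ⟨p + 2^(2*i) * W^2 * k, 2*z+2*z^2, ?_, ?_⟩
    · rw [seqU, hr, ← hW, hz]; ring
    · have e : tauF K (2*z+2*z^2) - 2 * 4^(i+1) * (tauF K y + 8 * (p + 2^(2*i)*W^2*k))
        = (tauF K (2*z+2*z^2) - (tauF K z + tauF K z))
          + 2 * (tauF K (2*r+2*r^2) - (tauF K r + tauF K r))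
          + 4 * (tauF K r - 2 * 4^i * (tauF K y + 8 * p)) := by
        have e4 : (4:ℤ[X])^i = 2^(2*i) := by rw [pow_mul]; norm_num
        rw [show (4:ℤ[X])^(i+1) = 4 * 2^(2*i) by rw [pow_succ, e4]; ring, e4]
        have e5 : (2:ℤ[X])^(4*i+5) = 2^(2*i) * 2^(2*i) * 32 := by ring
        rw [e5] at hk
        linear_combination 2 * hk
      rw [e]
      exact dvd_add (dvd_add h2 (h1.mul_left _)) (h.mul_left _)

lemma tauF_npow (k : ℕ) (r : ℤ) (m : ℕ) :
    ∃ r', (1 + 2*r)^m = 1 + 2*r' ∧ (2:ℤ)^(k+1) ∣ tauF k r' - m * tauF k r := by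
  induction m with
  | zero =>
    refine ⟨0, by simp, ?_⟩
    have : tauF k (0:ℤ) = 0 := by
      induction k with
      | zero => rfl
      | succ k ih => simp [tauF, ih]
    simp [this]
  | succ m ih =>
    obtain ⟨r', h1, h2⟩ := ih
    have h3 := tauF_mul k r' r (r' + r + 2*r'*r) (by ring)
    refine ⟨r' + r + 2*r'*r, by rw [pow_succ, h1]; ring, ?_⟩
    have e : tauF k (r' + r + 2*r'*r) - ((m+1 : ℕ) : ℤ) * tauF k r
      = (tauF k (r' + r + 2*r'*r) - (tauF k r' + tauF k r)) + (tauF k r' - m * tauF k r) := by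
      push_cast; linear_combination 0
    rw [e]
    exact dvd_add h3 h2

lemma one_add_four_pow {R : Type*} [CommRing R] (r : R) (t : ℕ) :
    ∃ r', (1 + 4*r)^t = 1 + 4*r' := by
  induction t with
  | zero => exact ⟨0, by simp⟩
  | succ t ih =>
    obtain ⟨r', h⟩ := ih
    exact ⟨r' + r + 4*r*r', by rw [pow_succ, h]; ring⟩

lemma levelI_arith (i m t : ℕ) (ρ ρ0 W W0 g g0 : ℤ) (ht1 : t + 1 = 2^(4*i+6))
    (h1 : (2:ℤ)^(2*(2*i+3)) ∣ (1+2*ρ) - (1+2*ρ0)^m)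
    (h2 : (2:ℤ)^(2*(2*i+3)) ∣ W * (1+2*ρ0) - m * W0 * (1+2*ρ))
    (hLz : (2:ℤ)^(4*i+6+1) ∣ tauF (4*i+6) ρ - 2*4^i*g)
    (hL0 : (2:ℤ)^(4*i+6+1) ∣ tauF (4*i+6) ρ0 - 2*4^i*g0) :
    (2:ℤ)^(2*i+4) ∣ g * (W0 * (1+2*ρ0)^t) - g0 * (W * (1+2*ρ)^t) := by
  obtain ⟨r', hr', hm⟩ := tauF_npow (4*i+6) ρ0 m
  have d1 : (2:ℤ)^(4*i+5) ∣ (2:ℤ)^(4*i+6+1) := pow_dvd_pow _ (by omega)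
  have d2 : (2:ℤ)^(4*i+5) ∣ (2:ℤ)^(2*(2*i+3)) := pow_dvd_pow _ (by omega)
  rw [hr'] at h1
  have h1' : (2:ℤ)^(4*i+5) ∣ ρ - r' := by
    have e1 : (2:ℤ)^(2*(2*i+3)) = 2 * 2^(4*i+5) := by ring
    rw [e1, show (1+2*ρ) - (1+2*r') = 2*(ρ-r') by ring] at h1
    exact (mul_dvd_mul_iff_left two_ne_zero).1 h1
  have h1t := tauF_congr (4*i+6) r' ρ _ h1'
  have p1 := tauF_pow (4*i+6) ρ
  have p0 := tauF_pow (4*i+6) ρ0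
  rw [← ht1, pow_succ] at p1 p0
  set T := tauF (4*i+6) ρ
  set T0 := tauF (4*i+6) ρ0
  set T' := tauF (4*i+6) r'
  set A := (1+2*ρ)^t
  set A0 := (1+2*ρ0)^t
  -- work in the quotient by divisibility witnesses
  set M := (2:ℤ)^(4*i+5) with hM
  have hq : (2:ℤ)^(4*i+6+1) = M * 4 := by rw [hM]; ring
  rw [hq] at p1 p0
  obtain ⟨x1, hx1⟩ := d1.trans hm
  obtain ⟨x2, hx2⟩ := h1t
  obtain ⟨x3, hx3⟩ := d2.trans h2
  obtain ⟨x4, hx4⟩ := d1.trans hLz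
  obtain ⟨x5, hx5⟩ := d1.trans hL0
  have key : M ∣ (2*4^i) * (g * (W0*A0) - g0 * (W*A)) := by
    have hT : T = m * T0 + M * (x1 + x2) := by linear_combination hx1 + hx2
    have hW : W * A = m * (W0 * A0) + M * (x3 * A * A0 - 4*T0*W*A + 4*m*W0*A0*T) := by
      linear_combination A * A0 * hx3 - W * A * p0 + m * W0 * A0 * p1
    have e : (2*4^i) * (g * (W0*A0) - g0 * (W*A))
      = T * (W0*A0) - T0 * (W*A) + M * (x5 * (W * A) - x4 * (W0 * A0)) := by
      linear_combination -(W0*A0) * hx4 + (W*A) * hx5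
    rw [e, hW]
    generalize x3 * A * A0 - 4*T0*W*A + 4*m*W0*A0*T = H
    rw [hT]
    exact ⟨(x1+x2)*(W0*A0) - T0*H + (x5 * (m*(W0*A0) + M*H) - x4*(W0*A0)), by ring⟩
  have e6 : M = (2*4^i) * 2^(2*i+4) := by
    rw [hM, show (4:ℤ) = 2^2 by norm_num, ← pow_mul]; ring
  rw [e6] at key
  exact (mul_dvd_mul_iff_left (by positivity)).1 key

lemma levelI (u w d : ℤ[X]) (c : ℤ) (hc : 2 ∣ c) (hd : 2 ∣ d) (hu : 2 ∣ u - 1)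
    (hy : u^2 + (2*w)^2 = 1 + 2*(C c + d)) (i : ℕ) :
    ∃ (s c' : ℤ) (p q G Wh : ℤ[X]), Odd s ∧ 2 ∣ c' ∧
      G = C c' + C s * (d + d^2) + 8 * p ∧ Wh = w * (u^3 + 4*q) ∧
      ∀ (z0 z : ℤ) (m : ℕ),
        (2:ℤ)^(2*(2*i+3)) ∣ (seqU (u.eval z) (w.eval z) (i+1)).1
            - (seqU (u.eval z0) (w.eval z0) (i+1)).1 ^ m →
        (2:ℤ)^(2*(2*i+3)) ∣ (seqU (u.eval z) (w.eval z) (i+1)).2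
              * (seqU (u.eval z0) (w.eval z0) (i+1)).1
            - m * (seqU (u.eval z0) (w.eval z0) (i+1)).2
              * (seqU (u.eval z) (w.eval z) (i+1)).1 →
        (2:ℤ)^(2*i+4) ∣ G.eval z * Wh.eval z0 - G.eval z0 * Wh.eval z := by
  set K := 4*i+6 with hK
  obtain ⟨p, r, hr, hL⟩ := seqL_form u w (C c + d) hu hy K i
  obtain ⟨s, p', hs, -, hG⟩ := tauF_expand (4*i+5) c hc d hd
  obtain ⟨q, hq⟩ := seqW_form u w hu i
  obtain ⟨r4, hr4⟩ := seqU_odd u w hu i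
  set t := 2^(K) - 1 with ht
  have ht1 : t + 1 = 2^K := Nat.sub_add_cancel Nat.one_le_two_pow
  obtain ⟨r5, hr5⟩ := one_add_four_pow r4 t
  have hU4 : (seqU u w (i+1)).1 = 1 + 4*r4 := by linear_combination hr4
  refine ⟨s, tauF K c, p' + p, q + (u^3+4*q)*r5, tauF K (C c + d) + 8*p,
    (seqU u w (i+1)).2 * (seqU u w (i+1)).1^t, hs, tauF_even _ _ hc, ?_, ?_, ?_⟩
  · rw [show K = 4*i+5+1 from rfl, hG]; ring
  · rw [hU4, hr5, hq]; ring
  intro z0 z m h1 h2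
  have hmap : ∀ z : ℤ, seqU (u.eval z) (w.eval z) (i+1)
      = ((seqU u w (i+1)).1.eval z, (seqU u w (i+1)).2.eval z) := fun z =>
    seqU_map (evalRingHom z) u w (i+1)
  rw [hmap z, hmap z0] at h1 h2
  simp only at h1 h2
  have hUe : ∀ z : ℤ, (seqU u w (i+1)).1.eval z = 1 + 2 * r.eval z := fun z => by
    rw [hr]; simp
  have hLe : ∀ z : ℤ, (2:ℤ)^(K+1) ∣ tauF K (r.eval z)
      - 2 * 4^i * (tauF K (C c + d) + 8*p).eval z := fun z => by
    have := map_dvd (evalRingHom z) hL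
    rw [map_sub, tauF_map] at this
    simpa using this
  set G := tauF K (C c + d) + 8*p with hGdef
  simp only [eval_mul, eval_pow]
  rw [hUe z, hUe z0] at *
  have hLz := hLe z
  have hL0 := hLe z0
  clear_value G
  clear hLe hUe hmap
  generalize G.eval z = g at *
  generalize (seqU u w (i+1)).2.eval z = W at *
  generalize (seqU u w (i+1)).2.eval z0 = W0 at *
  generalize r.eval z = ρ at *
  generalize r.eval z0 = ρ0 at *
  generalize G.eval z0 = g0 at *
  exact levelI_arith i m t ρ ρ0 W W0 g g0 ht1 h1 h2 hLz hL0

lemma div_diff (p : ℤ[X]) (x0 x1 x2 : ℤ) : ∃ A B : ℤ,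
    p.eval x1 - p.eval x0 = (x1 - x0) * A ∧
    p.eval x2 - p.eval x0 = (x2 - x0) * A + (x2 - x0) * (x2 - x1) * B := by
  obtain ⟨q, hq⟩ : (X - C x0) ∣ p - C (p.eval x0) := X_sub_C_dvd_sub_C_eval
  obtain ⟨B, hB⟩ := q.sub_dvd_eval_sub x2 x1
  have h : ∀ x, p.eval x - p.eval x0 = (x - x0) * q.eval x := fun x => by
    have := congrArg (eval x) hq
    simpa using this
  exact ⟨q.eval x1, B, h x1, by rw [h x2]; linear_combination (x2 - x0) * hB⟩

def CongS (u0 w0 u w : ℤ) (m : ℕ) : Prop := ∀ i : ℕ,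
  (2:ℤ)^(2*(2*i+3)) ∣ (seqU u w (i+1)).1 - (seqU u0 w0 (i+1)).1 ^ m ∧
  (2:ℤ)^(2*(2*i+3)) ∣ (seqU u w (i+1)).2 * (seqU u0 w0 (i+1)).1
            - m * (seqU u0 w0 (i+1)).2 * (seqU u w (i+1)).1

lemma finish_zero (M : ℤ) (h : ∀ i : ℕ, ∃ o : ℤ, Odd o ∧ (2:ℤ)^(2*i+4) ∣ 4 * o * M) : M = 0 := by
  by_contra hM
  obtain ⟨o, ho, hd⟩ := h M.natAbs
  have e : (2:ℤ)^(2*M.natAbs+4) = 4 * 2^(2*M.natAbs+2) := by ring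
  rw [e, mul_assoc] at hd
  have h1 := (mul_dvd_mul_iff_left (by norm_num : (4:ℤ) ≠ 0)).1 hd
  have hc : IsCoprime ((2:ℤ)^(2*M.natAbs+2)) o := by
    apply IsCoprime.pow_left
    exact (Int.isCoprime_iff_gcd_eq_one.2 (by
      obtain ⟨k, rfl⟩ := ho
      rw [← Int.isCoprime_iff_gcd_eq_one]
      exact ⟨-k, 1, by ring⟩))
  have h2 := hc.dvd_of_dvd_mul_left h1
  have h3 := Int.natAbs_dvd_natAbs.2 h2
  have h4 := Nat.le_of_dvd (Int.natAbs_pos.2 hM) h3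
  rw [Int.natAbs_pow] at h4
  have h5 : M.natAbs < 2^M.natAbs := Nat.lt_two_pow_self
  have h6 : 2^M.natAbs ≤ 2^(2*M.natAbs+2) := Nat.pow_le_pow_right (by norm_num) (by omega)
  have : (2:ℤ).natAbs = 2 := rfl
  rw [this] at h4
  omega

lemma det_dvd (D G0 G1 G2 W0 W1 W2 : ℤ) (h1 : D ∣ G1 * W0 - G0 * W1)
    (h2 : D ∣ G2 * W0 - G0 * W2) :
    D ∣ W0 * ((G1-G0)*(W2-W0) - (G2-G0)*(W1-W0)) := by
  have : W0 * ((G1-G0)*(W2-W0) - (G2-G0)*(W1-W0))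
    = (W2 - W0) * (G1 * W0 - G0 * W1) - (W1 - W0) * (G2 * W0 - G0 * W2) := by ring
  rw [this]
  exact dvd_sub (h1.mul_left _) (h2.mul_left _)

lemma regime1 (β z0 z1 z2 : ℤ) (m1 m2 : ℕ) (hβ : Odd β)
    (h1 : CongS β (-z0) β (-z1) m1) (h2 : CongS β (-z0) β (-z2) m2) :
    z0 * ((z1 - z0) * (z2 - z0) * (z2 - z1)) = 0 := by
  obtain ⟨b, hb⟩ := hβ
  apply finish_zero
  intro i
  obtain ⟨s, c', p, q, G, Wh, hs, hc', hG, hW, hh⟩ := levelI (C β) (-X) (2*X^2) (2*b^2+2*b)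
    ⟨b^2+b, by ring⟩ ⟨X^2, rfl⟩ ⟨C b, by simp [hb]⟩ (by simp [hb]; ring) i
  have k1 := hh z0 z1 m1 (by simpa using (h1 i).1) (by simpa using (h1 i).2)
  have k2 := hh z0 z2 m2 (by simpa using (h2 i).1) (by simpa using (h2 i).2)
  have k := det_dvd _ _ _ _ _ _ _ k1 k2
  obtain ⟨A, B, hA, hB⟩ := div_diff (C s * X^4 + 2*p) z0 z1 z2
  obtain ⟨A', B', hA', hB'⟩ := div_diff (X*q) z0 z1 z2
  have eG : ∀ z, G.eval z = c' + 2*s*z^2 + 4 * (C s * X^4 + 2*p).eval z := fun z => by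
    rw [hG]; simp; ring
  have eW : ∀ z, Wh.eval z = -β^3*z - 4*(X*q).eval z := fun z => by
    rw [hW]; simp; ring
  have eW0 : Wh.eval z0 = - z0 * (β^3 + 4 * q.eval z0) := by rw [hW]; simp
  have g1 : G.eval z1 - G.eval z0 = (z1 - z0) * (2*s*(z0+z1) + 4*A) := by
    rw [eG, eG]; linear_combination 4*hA
  have g2 : G.eval z2 - G.eval z0 = (z2 - z0) * (2*s*(z0+z1) + 4*A)
      + (z2-z0)*(z2-z1)*(2*s+4*B) := by
    rw [eG, eG]; linear_combination 4*hB
  have w1 : Wh.eval z1 - Wh.eval z0 = (z1 - z0) * (-β^3-4*A') := by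
    rw [eW, eW]; linear_combination -4*hA'
  have w2 : Wh.eval z2 - Wh.eval z0 = (z2 - z0) * (-β^3-4*A')
      + (z2-z0)*(z2-z1)*(-4*B') := by
    rw [eW, eW]; linear_combination -4*hB'
  rw [g1, g2, w1, w2, eW0] at k
  have o1 : Odd (β^3 + 4 * q.eval z0) := by
    refine Odd.add_even (Odd.pow ⟨b, hb⟩) ⟨2 * q.eval z0, by ring⟩
  have o2 : Odd (s*β^3 + 2*(-2*B'*s*(z0+z1) - 4*A*B' + β^3*B + 2*s*A' + 4*A'*B)) :=
    Odd.add_even (hs.mul (Odd.pow ⟨b, hb⟩)) ⟨_, two_mul _⟩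
  refine ⟨_, o1.mul o2, ?_⟩
  exact (k.mul_left (-2)).trans (dvd_of_eq (by ring))

lemma regime3 (β σ z0 z1 z2 : ℤ) (m1 m2 : ℕ) (hβ : Odd β) (hσ : σ = 1 ∨ σ = -1)
    (h1 : CongS (β+2*σ*z0) z0 (β+2*σ*z1) z1 m1) (h2 : CongS (β+2*σ*z0) z0 (β+2*σ*z2) z2 m2) :
    z0 * ((z1 - z0) * (z2 - z0) * (z2 - z1)) = 0 := by
  obtain ⟨b, hb⟩ := hβ
  apply finish_zero
  intro i
  have hσ2 : σ^2 = 1 := by rcases hσ with rfl | rfl <;> norm_num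
  have hσo : Odd σ := by rcases hσ with rfl | rfl <;> decide
  have hCσ : (C σ : ℤ[X])^2 = 1 := by rw [← C_pow, hσ2, C_1]
  rw [eq_intCast] at hCσ
  obtain ⟨s, c', p, q, G, Wh, hs, hc', hG, hW, hh⟩ := levelI (C β + 2*C σ*X) X
    (2*C σ * C β*X+4*X^2) (2*b^2+2*b)
    ⟨b^2+b, by ring⟩ ⟨C σ * C β*X+2*X^2, by ring⟩ ⟨C b + C σ*X, by simp [hb]; ring⟩
    (by simp [hb]; linear_combination 4*X^2*hCσ) i
  have k1 := hh z0 z1 m1 (by simpa using (h1 i).1) (by simpa using (h1 i).2)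
  have k2 := hh z0 z2 m2 (by simpa using (h2 i).1) (by simpa using (h2 i).2)
  have k := det_dvd _ _ _ _ _ _ _ k1 k2
  set P : ℤ[X] := C s * (C (2*b^2+2*b+1) * X^2 + 2*C σ*C β*X^3 + 2*X^4) + p with hP
  set Q : ℤ[X] := X * (3*C β*X^2 + 2*C σ*X^3 + q) with hQ
  obtain ⟨A, B, hA, hB⟩ := div_diff P z0 z1 z2
  obtain ⟨A', B', hA', hB'⟩ := div_diff Q z0 z1 z2
  have eG : ∀ z, G.eval z = c' + 2*s*σ*β*z + 8 * P.eval z := fun z => by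
    rw [hG, hP]; simp [hb]
    linear_combination s*(4*(2*b+1)^2*z^2) * hσ2
  have eW : ∀ z, Wh.eval z = β^3*z + 6*σ*β^2*z^2 + 4*Q.eval z := fun z => by
    rw [hW, hQ]; simp
    linear_combination (12*β*z^3+8*σ*z^4)*hσ2
  have eW0 : Wh.eval z0 = z0 * ((β + 2*σ*z0)^3 + 4 * q.eval z0) := by rw [hW]; simp
  have g1 : G.eval z1 - G.eval z0 = (z1 - z0) * (2*s*σ*β + 8*A) := by
    rw [eG, eG]; linear_combination 8*hA
  have g2 : G.eval z2 - G.eval z0 = (z2 - z0) * (2*s*σ*β + 8*A)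
      + (z2-z0)*(z2-z1)*(8*B) := by
    rw [eG, eG]; linear_combination 8*hB
  have w1 : Wh.eval z1 - Wh.eval z0 = (z1 - z0) * (β^3+6*σ*β^2*(z0+z1)+4*A') := by
    rw [eW, eW]; linear_combination 4*hA'
  have w2 : Wh.eval z2 - Wh.eval z0 = (z2 - z0) * (β^3+6*σ*β^2*(z0+z1)+4*A')
      + (z2-z0)*(z2-z1)*(6*σ*β^2+4*B') := by
    rw [eW, eW]; linear_combination 4*hB'
  rw [g1, g2, w1, w2, eW0] at k
  have o1 : Odd ((β + 2*σ*z0)^3 + 4 * q.eval z0) := by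
    refine Odd.add_even (Odd.pow ⟨b + σ*z0, by rw [hb]; ring⟩) ⟨2 * q.eval z0, by ring⟩
  have o2 : Odd (3*s*σ^2*β^3 + 2*(s*σ*β*B' + 6*A*σ*β^2+4*A*B' - B*(β^3+6*σ*β^2*(z0+z1)+4*A'))) :=
    Odd.add_even ((((by decide : Odd (3:ℤ)).mul hs).mul hσo.pow).mul (Odd.pow ⟨b, hb⟩))
      ⟨_, two_mul _⟩
  refine ⟨_, o1.mul o2, ?_⟩
  convert k using 1
  ring

lemma regime2 (α b z0 z1 : ℤ) (m1 : ℕ) (hα : Odd α) (hb : Odd b)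
    (h1 : CongS (α+4*z0) b (α+4*z1) b m1) :
    z1 - z0 = 0 := by
  obtain ⟨a, ha⟩ := hα
  apply finish_zero
  intro i
  obtain ⟨s, c', p, q, G, Wh, hs, hc', hG, hW, hh⟩ := levelI (C α + 4*X) (C b)
    (4*C α*X+8*X^2) (2*a^2+2*a+2*b^2)
    ⟨a^2+a+b^2, by ring⟩ ⟨2*C α*X+4*X^2, by ring⟩ ⟨C a + 2*X, by simp [ha]; ring⟩
    (by simp [ha]; ring) i
  have k := hh z0 z1 m1 (by simpa using (h1 i).1) (by simpa using (h1 i).2)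
  set P : ℤ[X] := C s * (X^2 + 2*(C α*X+2*X^2)^2) + p with hP
  set Q : ℤ[X] := C b * (3*C α^2*X + 12*C α*X^2 + 16*X^3 + q) with hQ
  obtain ⟨A, B, hA, hB⟩ := div_diff P z0 z1 z1
  obtain ⟨A', B', hA', hB'⟩ := div_diff Q z0 z1 z1
  have eG : ∀ z, G.eval z = c' + 4*s*α*z + 8 * P.eval z := fun z => by
    rw [hG, hP]; simp; ring
  have eW : ∀ z, Wh.eval z = b*α^3 + 4*Q.eval z := fun z => by
    rw [hW, hQ]; simp; ring
  have g1 : G.eval z1 - G.eval z0 = (z1 - z0) * (4*s*α + 8*A) := by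
    rw [eG, eG]; linear_combination 8*hA
  have w1 : Wh.eval z1 - Wh.eval z0 = (z1 - z0) * (4*A') := by
    rw [eW, eW]; linear_combination 4*hA'
  have hG0 : 2 ∣ G.eval z0 := by
    rw [eG]; obtain ⟨c, rfl⟩ := hc'
    exact ⟨c + 2*s*α*z0 + 4*P.eval z0, by ring⟩
  obtain ⟨g, hg⟩ := hG0
  have o1 : Odd (Wh.eval z0) := by
    rw [eW]
    exact Odd.add_even (hb.mul (Odd.pow ⟨a, ha⟩)) ⟨2*Q.eval z0, by ring⟩
  have o2 : Odd ((s*α+2*A)*Wh.eval z0 - 2*(g*A')) :=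
    Odd.sub_even (((hs.mul ⟨a, ha⟩).add_even ⟨A, by ring⟩).mul o1) ⟨_, two_mul _⟩
  refine ⟨_, o2, ?_⟩
  convert k using 1
  linear_combination -Wh.eval z0 * g1 + G.eval z0 * w1 + 4*A'*(z1-z0)*hg

end PolyPart

section CurvePart
open WeierstrassCurve.Affine

lemma cc_eq {N : ℕ} {x y : ℚ} (h : (congruentCurve N).Nonsingular x y) :
    y^2 = x^3 - N^2 * x := by
  have := (WeierstrassCurve.Affine.equation_iff _ _).1 h.1
  simp [congruentCurve] at this
  linear_combination this

lemma cc_neg {N : ℕ} {x y : ℚ} (h : (congruentCurve N).Nonsingular x y) :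
    ∃ h', - (Point.some x y h) = Point.some x (-y) h' := by
  refine ⟨?_, ?_⟩
  · have := (WeierstrassCurve.Affine.nonsingular_neg (W' := congruentCurve N) x y).2 h
    simpa [WeierstrassCurve.Affine.negY, congruentCurve] using this
  · rw [Point.neg_some]
    simp [WeierstrassCurve.Affine.negY, congruentCurve]

lemma cc_dbl_zero {N : ℕ} {x y : ℚ} (h : (congruentCurve N).Nonsingular x y) (hy : y = 0) :
    (2:ℕ) • (Point.some x y h) = 0 := by
  rw [two_nsmul]
  apply Point.add_self_of_Y_eq
  simp [WeierstrassCurve.Affine.negY, congruentCurve, hy]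

lemma cc_dbl {N : ℕ} {x y : ℚ} (h : (congruentCurve N).Nonsingular x y) (hy : y ≠ 0) :
    ∃ x' y' h', (2:ℕ) • (Point.some x y h) = Point.some x' y' h' ∧
      x' = ((x^2 + N^2) / (2*y))^2 := by
  have hne : y ≠ (congruentCurve N).negY x y := by
    simp [WeierstrassCurve.Affine.negY, congruentCurve]
    intro h; apply hy; linarith
  rw [two_nsmul, Point.add_self_of_Y_ne hne]
  refine ⟨_, _, _, rfl, ?_⟩
  rw [WeierstrassCurve.Affine.slope_of_Y_ne rfl hne]
  have := cc_eq h
  simp [WeierstrassCurve.Affine.addX, WeierstrassCurve.Affine.negY, congruentCurve]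
  rw [← two_mul]
  field_simp
  linear_combination (-8*x) * this

lemma cc_add {N : ℕ} {x1 y1 x2 y2 : ℚ} (h1 : (congruentCurve N).Nonsingular x1 y1)
    (h2 : (congruentCurve N).Nonsingular x2 y2) (hx : x1 ≠ x2) :
    ∃ x' y' h', (Point.some x1 y1 h1) + (Point.some x2 y2 h2) = Point.some x' y' h' ∧
      x' = ((y1-y2)/(x1-x2))^2 - x1 - x2 := by
  rw [Point.add_of_X_ne hx]
  refine ⟨_, _, _, rfl, ?_⟩
  rw [WeierstrassCurve.Affine.slope_of_X_ne hx]
  simp [WeierstrassCurve.Affine.addX, congruentCurve]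

lemma cc_addsub {N : ℕ} {x1 y1 x2 y2 : ℚ} (h1 : (congruentCurve N).Nonsingular x1 y1)
    (h2 : (congruentCurve N).Nonsingular x2 y2) (hx : x1 ≠ x2) :
    ∃ xp yp hp xm ym hm, (Point.some x1 y1 h1) + (Point.some x2 y2 h2) = Point.some xp yp hp ∧
      (Point.some x1 y1 h1) - (Point.some x2 y2 h2) = Point.some xm ym hm ∧
      xp * xm * (x1-x2)^2 = (x1*x2+N^2)^2 ∧
      (xp + xm) * (x1-x2)^2 = 2 * (x1+x2) * (x1*x2-N^2) := by
  obtain ⟨xp, yp, hp, ep, e1⟩ := cc_add h1 h2 hx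
  obtain ⟨h2', e2'⟩ := cc_neg h2
  obtain ⟨xm, ym, hm, em, e2⟩ := cc_add h1 h2' hx
  refine ⟨xp, yp, hp, xm, ym, hm, ep, by rw [sub_eq_add_neg, e2', em], ?_, ?_⟩
  · have hx' : x1 - x2 ≠ 0 := sub_ne_zero.2 hx
    have q1 := cc_eq h1
    have q2 := cc_eq h2
    have f1 : xp * (x1-x2)^2 = (y1-y2)^2 - (x1+x2)*(x1-x2)^2 := by rw [e1]; field_simp; ring
    have f2 : xm * (x1-x2)^2 = (y1+y2)^2 - (x1+x2)*(x1-x2)^2 := by rw [e2]; field_simp; ring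
    apply mul_right_cancel₀ (pow_ne_zero 2 hx')
    have : xp * xm * (x1-x2)^2 * (x1-x2)^2 = ((y1-y2)^2 - (x1+x2)*(x1-x2)^2)*((y1+y2)^2 - (x1+x2)*(x1-x2)^2) := by
      rw [← f1, ← f2]; ring
    rw [this]
    have q3 : ((y1-y2)^2 - (x1+x2)*(x1-x2)^2)*((y1+y2)^2 - (x1+x2)*(x1-x2)^2)
      = (y1^2-y2^2)^2 - 2*(x1+x2)*(x1-x2)^2*(y1^2+y2^2) + ((x1+x2)*(x1-x2)^2)^2 := by ring
    rw [q3, q1, q2]; ring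
  · have hx' : x1 - x2 ≠ 0 := sub_ne_zero.2 hx
    have q1 := cc_eq h1
    have q2 := cc_eq h2
    rw [e1, e2]; field_simp
    linear_combination 2*q1+2*q2

def CRep (N : ℕ) (Q : (congruentCurve N).Point) (a b : ℤ) : Prop :=
  IsCoprime a b ∧ ∃ x y h, Q = Point.some x y h ∧ b ≠ 0 ∧ x * b = N * a

def DRep (N : ℕ) (Q : (congruentCurve N).Point) (a b : ℤ) : Prop :=
  CRep N Q a b ∧ Odd a ∧ 0 < a ∧ Even b

lemma rep_exists {N : ℕ} (hN : 0 < N) (Q : (congruentCurve N).Point) (hQ : Q ≠ 0) :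
    ∃ a b : ℤ, CRep N Q a b ∧ 0 < b := by
  match Q, hQ with
  | Point.some x y h, _ =>
    refine ⟨(x/N).num, (x/N).den, ⟨?_, x, y, h, rfl, ?_, ?_⟩, ?_⟩
    · rw [Int.isCoprime_iff_gcd_eq_one]
      exact (x/N).reduced
    · exact_mod_cast (x/N).den_nz
    · have h1 := Rat.mul_den_eq_num (x/N)
      have hN' : (N:ℚ) ≠ 0 := by exact_mod_cast hN.ne'
      push_cast
      rw [← h1]; field_simp
    · exact_mod_cast (x/N).den_pos
  | 0, h => exact absurd rfl h

lemma rep_cross {N : ℕ} (hN : 0 < N) {Q : (congruentCurve N).Point} {a b a' b' : ℤ}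
    (h : CRep N Q a b) (h' : CRep N Q a' b') : a * b' = a' * b := by
  obtain ⟨-, x, y, hh, rfl, hb, e⟩ := h
  obtain ⟨-, x', y', hh', eq, hb', e'⟩ := h'
  rw [Point.some.injEq] at eq
  obtain ⟨rfl, rfl⟩ := eq
  have hN' : (N:ℚ) ≠ 0 := by exact_mod_cast hN.ne'
  have : (a:ℚ) * b' = a' * b := by
    apply mul_left_cancel₀ hN'
    linear_combination b * e' - b' * e
  exact_mod_cast this

lemma drep_unique {N : ℕ} (hN : 0 < N) {Q : (congruentCurve N).Point} {a b a' b' : ℤ}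
    (h : DRep N Q a b) (h' : DRep N Q a' b') : a = a' ∧ b = b' := by
  have e := rep_cross hN h.1 h'.1
  have d1 : a ∣ a' := h.1.1.dvd_of_dvd_mul_right ⟨b', e.symm⟩
  have d2 : a' ∣ a := h'.1.1.dvd_of_dvd_mul_right ⟨b, e⟩
  have := Int.dvd_antisymm h.2.2.1.le h'.2.2.1.le d1 d2
  subst this
  exact ⟨rfl, (mul_left_cancel₀ h.2.2.1.ne' e).symm⟩

lemma phi_coprime {u v : ℤ} (h : IsCoprime u v) (hu : Odd u) (hv : Even v) :
    IsCoprime ((u^2+v^2)^2) (4*u*v*(u^2-v^2)) := by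
  have h2 : IsCoprime (u^2+v^2) 2 := by
    have : Odd (u^2+v^2) := hu.pow.add_even (hv.pow_of_ne_zero (by norm_num))
    obtain ⟨k, hk⟩ := this
    exact ⟨1, -k, by rw [hk]; ring⟩
  have h3 : IsCoprime (u^2+v^2) u := by
    have : IsCoprime (v^2) u := h.symm.pow_left
    have := this.add_mul_left_left u
    rwa [show v^2 + u*u = u^2+v^2 by ring] at this
  have h4 : IsCoprime (u^2+v^2) v := by
    have : IsCoprime (u^2) v := h.pow_left
    have := this.add_mul_left_left v
    rwa [show u^2 + v*v = u^2+v^2 by ring] at this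
  have h5 : IsCoprime (u^2+v^2) (u^2-v^2) := by
    have : IsCoprime (u^2+v^2) (2*u^2) := h2.mul_right h3.pow_right
    have := this.add_mul_left_right (-1)
    rwa [show 2*u^2 + (u^2+v^2)*(-1) = u^2-v^2 by ring] at this
  apply IsCoprime.pow_left
  exact ((((show (4:ℤ) = 2^2 by norm_num) ▸ h2.pow_right).mul_right h3).mul_right h4).mul_right h5

lemma dbl_rep {N : ℕ} (hN : 0 < N) (hsq : Squarefree N) {Q : (congruentCurve N).Point} {α β u v : ℤ}
    (hQ : CRep N Q α β) (h2 : (2:ℕ) • Q ≠ 0) (huv : IsCoprime u v) (hu : Odd u) (hv : Even v)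
    (he : (u^2+v^2)^2 * (4*α*β*(α^2-β^2)) = 4*u*v*(u^2-v^2) * (α^2+β^2)^2) :
    DRep N ((2:ℕ) • Q) ((u^2+v^2)^2) (4*u*v*(u^2-v^2)) ∧ (N:ℤ) ∣ 4*u*v*(u^2-v^2) := by
  obtain ⟨hc, x, y, h, rfl, hβ, e⟩ := hQ
  have hN' : (N:ℚ) ≠ 0 := by exact_mod_cast hN.ne'
  have hβ' : (β:ℚ) ≠ 0 := by exact_mod_cast hβ
  have hy : y ≠ 0 := fun hy => h2 (cc_dbl_zero h hy)
  have hq := cc_eq h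
  obtain ⟨x', y', h', e1, e2⟩ := cc_dbl h hy
  have hcop := phi_coprime huv hu hv
  have hodd : Odd (u^2+v^2) := hu.pow.add_even (hv.pow_of_ne_zero (by norm_num))
  have hx : x = N * α / β := by field_simp; linear_combination e
  have hyy : (β:ℚ)^4 * y^2 = N^3 * (α*β*(α^2-β^2)) := by
    rw [hq, hx]; field_simp
  have hb0 : (4*α*β*(α^2-β^2) : ℤ) ≠ 0 := by
    intro h0
    have h0' : (4*α*β*(α^2-β^2) : ℚ) = 0 := by exact_mod_cast h0
    have : (β:ℚ)^4 * y^2 = 0 := by rw [hyy]; linear_combination N^3/4 * h0'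
    have : (β:ℚ)^4 * y^2 ≠ 0 := by positivity
    contradiction
  have hb0' : (4*α*β*(α^2-β^2) : ℚ) ≠ 0 := by exact_mod_cast hb0
  have hx0 : x' * (4*α*β*(α^2-β^2)) = N * (α^2+β^2)^2 := by
    have f1 : x' * (4*y^2) = (x^2+N^2)^2 := by rw [e2]; field_simp; norm_num
    have f2 : (x^2+N^2)*β^2 = N^2*(α^2+β^2) := by rw [hx]; field_simp
    have f3 : x' * (4 * (β^4*y^2)) = (N^2*(α^2+β^2))^2 := by
      rw [← f2]; linear_combination β^4 * f1
    rw [hyy] at f3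
    apply mul_left_cancel₀ (pow_ne_zero 3 hN')
    linear_combination f3
  have heq : ((u^2+v^2)^2 * (4*α*β*(α^2-β^2)) : ℚ) = 4*u*v*(u^2-v^2) * (α^2+β^2)^2 := by
    exact_mod_cast he
  have hx1 : x' * (4*u*v*(u^2-v^2)) = N * (u^2+v^2)^2 := by
    apply mul_right_cancel₀ hb0'
    linear_combination (4*u*v*(u^2-v^2)) * hx0 - N * heq
  have hne : (u^2+v^2) ≠ 0 := by rintro h0; rw [h0] at hodd; exact absurd hodd (by decide)
  refine ⟨⟨⟨hcop, x', y', h', e1, ?_, by push_cast; exact hx1⟩, hodd.pow, by positivity,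
    ⟨2*u*v*(u^2-v^2), by ring⟩⟩, ?_⟩
  · intro h0
    rw [h0, zero_mul] at he
    exact (mul_ne_zero (pow_ne_zero 2 hne) hb0) he
  · have hX : x' ≠ 0 := by
      intro h0; rw [h0, zero_mul] at hx1
      have : ((u^2+v^2 : ℤ):ℚ) ≠ 0 := by exact_mod_cast hne
      push_cast at this
      exact (mul_ne_zero hN' (pow_ne_zero 2 this)) hx1.symm
    set X := (x^2+N^2)/(2*y) with hXdef
    have hX' : X ≠ 0 := by rintro h0; apply hX; rw [e2, h0]; norm_num
    have hs : IsSquare (((N * (4*u*v*(u^2-v^2)) : ℤ)) : ℚ) := by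
      refine ⟨N * (u^2+v^2) / X, ?_⟩
      rw [e2] at hx1
      push_cast
      field_simp
      linear_combination hx1
    rw [Rat.isSquare_intCast_iff] at hs
    obtain ⟨m, hm⟩ := hs
    have hNsq : Squarefree (N:ℤ) := Int.squarefree_natCast.2 hsq
    have d : (N:ℤ) ∣ m := by
      have : (N:ℤ) ∣ m^2 := ⟨_, by rw [pow_two, ← hm]⟩
      exact (hNsq.dvd_pow_iff_dvd (by norm_num)).1 this
    obtain ⟨k, rfl⟩ := d
    refine ⟨k*k, ?_⟩
    have hNz : (N:ℤ) ≠ 0 := by exact_mod_cast hN.ne'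
    apply mul_left_cancel₀ hNz
    linear_combination hm

lemma exists_uv {α β : ℤ} (h : IsCoprime α β) : ∃ u v : ℤ, IsCoprime u v ∧ Odd u ∧ Even v ∧
    (u^2+v^2)^2 * (4*α*β*(α^2-β^2)) = 4*u*v*(u^2-v^2) * (α^2+β^2)^2 := by
  obtain ⟨r, s, hrs⟩ := h
  rcases Int.even_or_odd α with ha | ha <;> rcases Int.even_or_odd β with hb | hb
  · exfalso
    have : Even (r*α+s*β) := (ha.mul_left r).add (hb.mul_left s)
    rw [hrs] at this; exact absurd this (by decide)
  · exact ⟨β, -α, ⟨s, -r, by linear_combination hrs⟩, hb, ha.neg, by ring⟩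
  · exact ⟨α, β, ⟨r, s, hrs⟩, ha, hb, by ring⟩
  · obtain ⟨k, hk⟩ := ha.add_odd hb
    have hα : α = 2*k - β := by linarith
    subst hα
    rcases Int.even_or_odd k with he | ho
    · refine ⟨β-k, k, ⟨s-r, r+s, by linear_combination hrs⟩, hb.sub_even he, he, by ring⟩
    · refine ⟨k, k-β, ⟨r+s, r-s, by linear_combination hrs⟩, ho, ho.sub_odd hb, by ring⟩

lemma dbl_drep {N : ℕ} (hN : 0 < N) (hsq : Squarefree N) {Q : (congruentCurve N).Point}
    (h2 : (2:ℕ) • Q ≠ 0) : ∃ a b, DRep N ((2:ℕ) • Q) a b ∧ (N:ℤ) ∣ b ∧ 8 ∣ b := by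
  obtain ⟨α, β, hr, -⟩ := rep_exists hN Q (by rintro rfl; simp at h2)
  obtain ⟨u, v, huv, hu, hv, he⟩ := exists_uv hr.1
  obtain ⟨h, h'⟩ := dbl_rep hN hsq hr h2 huv hu hv he
  refine ⟨_, _, h, h', ?_⟩
  obtain ⟨k, rfl⟩ := hv
  exact ⟨u*k*(u^2-(k+k)^2), by ring⟩

lemma rep_add {N : ℕ} (hN : 0 < N) {Q1 Q2 : (congruentCurve N).Point}
    {a1 b1 a2 b2 ap bp am bm : ℤ} (h1 : CRep N Q1 a1 b1) (h2 : CRep N Q2 a2 b2)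
    (hne : Q1 ≠ Q2) (hne' : Q1 ≠ -Q2)
    (hp : CRep N (Q1 + Q2) ap bp) (hm : CRep N (Q1 - Q2) am bm) :
    a1*b2 - a2*b1 ≠ 0 ∧
    (ap*am) * (a1*b2-a2*b1)^2 = (bp*bm) * (a1*a2+b1*b2)^2 ∧
    (ap*bm+am*bp) * (a1*b2-a2*b1)^2 = (bp*bm) * (2*(a1*b2+a2*b1)*(a1*a2-b1*b2)) := by
  obtain ⟨-, x1, y1, hh1, rfl, hb1, e1⟩ := h1
  obtain ⟨-, x2, y2, hh2, rfl, hb2, e2⟩ := h2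
  have hx : x1 ≠ x2 := fun h => by
    rcases (Point.X_eq_iff (h₁ := hh1) (h₂ := hh2)).1 h with h | h
    · exact hne h
    · exact hne' h
  obtain ⟨xp, yp, hp', xm, ym, hm', ep, em, r1, r2⟩ := cc_addsub hh1 hh2 hx
  obtain ⟨-, x3, y3, hh3, e3', hb3, e3⟩ := hp
  obtain ⟨-, x4, y4, hh4, e4', hb4, e4⟩ := hm
  rw [ep, Point.some.injEq] at e3'
  rw [em, Point.some.injEq] at e4'
  obtain ⟨rfl, -⟩ := e3'
  obtain ⟨rfl, -⟩ := e4'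
  have hN' : (N:ℚ) ≠ 0 := by exact_mod_cast hN.ne'
  have c1 : (b1:ℚ) ≠ 0 := by exact_mod_cast hb1
  have c2 : (b2:ℚ) ≠ 0 := by exact_mod_cast hb2
  have g1 : (x1 - x2) * (b1*b2) = N * (a1*b2-a2*b1) := by linear_combination b2*e1 - b1*e2
  have g2 : (x1 + x2) * (b1*b2) = N * (a1*b2+a2*b1) := by linear_combination b2*e1 + b1*e2
  have g3 : (x1 * x2) * (b1*b2) = N^2*(a1*a2) := by linear_combination x2*b2*e1 + N*a1*e2
  have g4 : (x1*x2 + N^2)*(b1*b2) = N^2*(a1*a2+b1*b2) := by linear_combination g3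
  have g5 : (x1*x2 - N^2)*(b1*b2) = N^2*(a1*a2-b1*b2) := by linear_combination g3
  have g6 : (xp * xm) * (bp*bm) = N^2*(ap*am) := by linear_combination xm*bm*e3 + N*ap*e4
  have g7 : (xp + xm) * (bp*bm) = N*(ap*bm+am*bp) := by linear_combination bm*e3+bp*e4
  refine ⟨?_, ?_, ?_⟩
  · intro h0
    have h0' : (a1*b2-a2*b1 : ℚ) = 0 := by exact_mod_cast h0
    rw [h0', mul_zero] at g1
    exact (mul_ne_zero (sub_ne_zero.2 hx) (mul_ne_zero c1 c2)) g1
  · have : ((ap*am) * (a1*b2-a2*b1)^2 : ℚ) = (bp*bm) * (a1*a2+b1*b2)^2 := by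
      apply mul_left_cancel₀ (pow_ne_zero 4 hN')
      calc (N:ℚ)^4 * ((ap*am) * (a1*b2-a2*b1)^2)
          = (N^2*(ap*am)) * (N * (a1*b2-a2*b1))^2 := by ring
        _ = ((xp * xm) * (bp*bm)) * ((x1 - x2) * (b1*b2))^2 := by rw [g6, g1]
        _ = (bp*bm) * (xp*xm*(x1-x2)^2) * (b1*b2)^2 := by ring
        _ = (bp*bm) * ((x1*x2 + N^2)*(b1*b2))^2 := by rw [r1]; ring
        _ = _ := by rw [g4]; ring
    exact_mod_cast this
  · have : ((ap*bm+am*bp) * (a1*b2-a2*b1)^2 : ℚ) = (bp*bm) * (2*(a1*b2+a2*b1)*(a1*a2-b1*b2)) := by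
      apply mul_left_cancel₀ (pow_ne_zero 3 hN')
      calc (N:ℚ)^3 * ((ap*bm+am*bp) * (a1*b2-a2*b1)^2)
          = (N*(ap*bm+am*bp)) * (N * (a1*b2-a2*b1))^2 := by ring
        _ = ((xp + xm) * (bp*bm)) * ((x1 - x2) * (b1*b2))^2 := by rw [g7, g1]
        _ = (bp*bm) * ((xp+xm)*(x1-x2)^2) * (b1*b2)^2 := by ring
        _ = (bp*bm) * (2*((x1+x2)*(b1*b2))*((x1*x2 - N^2)*(b1*b2))) := by rw [r2]; ring
        _ = _ := by rw [g5, g2]; ring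
    exact_mod_cast this

lemma prim3 (v0 v1 v2 : ℤ) (h : ∀ p : ℤ, Prime p → p ∣ v0 → p ∣ v1 → p ∣ v2 → False) :
    ∃ r s t : ℤ, r*v0 + s*v1 + t*v2 = 1 := by
  have hg : IsCoprime ((Int.gcd v0 v1 : ℤ)) v2 := by
    rw [Int.isCoprime_iff_gcd_eq_one]
    by_contra hne
    obtain ⟨p, hp, hd⟩ := Nat.exists_prime_and_dvd hne
    have hd' : (p:ℤ) ∣ (Int.gcd (Int.gcd v0 v1 : ℤ) v2 : ℤ) := by exact_mod_cast hd
    have d1 := hd'.trans (Int.gcd_dvd_left _ _)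
    exact h p (Nat.prime_iff_prime_int.1 hp) (d1.trans (Int.gcd_dvd_left _ _))
      (d1.trans (Int.gcd_dvd_right _ _)) (hd'.trans (Int.gcd_dvd_right _ _))
  obtain ⟨x, y, hxy⟩ := hg
  rw [Int.gcd_eq_gcd_ab] at hxy
  exact ⟨x * Int.gcdA v0 v1, x * Int.gcdB v0 v1, y, by linear_combination hxy⟩

lemma not_both {p a b : ℤ} (hp : Prime p) (h : IsCoprime a b) (h1 : p ∣ a) (h2 : p ∣ b) : False :=
  hp.not_isUnit (h.isUnit_of_dvd' h1 h2)

lemma primV {a b c d : ℤ} (h1 : IsCoprime a b) (h2 : IsCoprime c d) :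
    ∃ r s t : ℤ, r*(a*c) + s*(a*d+c*b) + t*(b*d) = 1 := by
  apply prim3
  intro p hp d0 d1 d2
  rcases hp.dvd_or_dvd d0 with h | h
  · have : p ∣ c*b := (dvd_add_right (h.mul_right d)).1 d1
    rcases hp.dvd_or_dvd this with hc | hb
    · rcases hp.dvd_or_dvd d2 with hb | hd
      · exact not_both hp h1 h hb
      · exact not_both hp h2 hc hd
    · exact not_both hp h1 h hb
  · have : p ∣ a*d := (dvd_add_left (h.mul_right b)).1 d1
    rcases hp.dvd_or_dvd this with ha | hd
    · rcases hp.dvd_or_dvd d2 with hb | hd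
      · exact not_both hp h1 ha hb
      · exact not_both hp h2 h hd
    · exact not_both hp h2 h hd

lemma primF {a b c d : ℤ} (h1 : IsCoprime a b) (h2 : IsCoprime c d) (ha : Odd a) (hc : Odd c)
    (hb : Even b) :
    ∃ r s t : ℤ, r*(a*c+b*d)^2 + s*(2*(a*d+c*b)*(a*c-b*d)) + t*(a*d-c*b)^2 = 1 := by
  apply prim3
  intro p hp d0 d1 d2
  have d0 := hp.dvd_of_dvd_pow d0
  have d2 := hp.dvd_of_dvd_pow d2
  have hodd : Odd (a*c+b*d) := (ha.mul hc).add_even (hb.mul_right d)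
  have hp2 : ¬ p ∣ 2 := fun h => by
    obtain ⟨k, hk⟩ := hodd
    have : p ∣ 1 := by
      have := dvd_sub d0 (h.mul_right k)
      rwa [hk, add_sub_cancel_left] at this
    exact hp.not_isUnit (isUnit_of_dvd_one this)
  have key : ∀ z, p ∣ 2 * z → p ∣ z := fun z hz => (hp.dvd_or_dvd hz).resolve_left hp2
  rcases hp.dvd_or_dvd d1 with h | h
  · have h := key _ h
    have e1 : p ∣ a*d := key _ (by have := dvd_add h d2; rwa [show a*d+c*b+(a*d-c*b) = 2*(a*d) by ring] at this)
    have e2 : p ∣ c*b := key _ (by have := dvd_sub h d2; rwa [show a*d+c*b-(a*d-c*b) = 2*(c*b) by ring] at this)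
    rcases hp.dvd_or_dvd e1 with k | k
    · rcases hp.dvd_or_dvd e2 with k' | k'
      · have : p ∣ b*d := (dvd_add_right (k.mul_right c)).1 d0
        rcases hp.dvd_or_dvd this with k2 | k2
        · exact not_both hp h1 k k2
        · exact not_both hp h2 k' k2
      · exact not_both hp h1 k k'
    · rcases hp.dvd_or_dvd e2 with k' | k'
      · exact not_both hp h2 k' k
      · have : p ∣ a*c := (dvd_add_left (k.mul_left b)).1 d0
        rcases hp.dvd_or_dvd this with k2 | k2
        · exact not_both hp h1 k2 k'
        · exact not_both hp h2 k2 k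
  · have e1 : p ∣ a*c := key _ (by have := dvd_add d0 h; rwa [show a*c+b*d+(a*c-b*d) = 2*(a*c) by ring] at this)
    have e2 : p ∣ b*d := key _ (by have := dvd_sub d0 h; rwa [show a*c+b*d-(a*c-b*d) = 2*(b*d) by ring] at this)
    rcases hp.dvd_or_dvd e1 with k | k
    · rcases hp.dvd_or_dvd e2 with k' | k'
      · exact not_both hp h1 k k'
      · have : p ∣ c*b := (dvd_sub_right (k.mul_right d)).1 d2
        rcases hp.dvd_or_dvd this with k2 | k2
        · exact not_both hp h2 k2 k'
        · exact not_both hp h1 k k2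
    · rcases hp.dvd_or_dvd e2 with k' | k'
      · have : p ∣ a*d := (dvd_sub_left (k.mul_right b)).1 d2
        rcases hp.dvd_or_dvd this with k2 | k2
        · exact not_both hp h1 k2 k'
        · exact not_both hp h2 k k2
      · exact not_both hp h2 k k'

lemma prim_eq {v0 v1 v2 f0 f1 f2 : ℤ} (hv : ∃ r s t : ℤ, r*v0+s*v1+t*v2 = 1)
    (hf : ∃ r s t : ℤ, r*f0+s*f1+t*f2 = 1) (h0 : 0 < v0) (h0' : 0 < f0) (hf2 : f2 ≠ 0)
    (e1 : v0*f2 = v2*f0) (e2 : v1*f2 = v2*f1) : v0 = f0 ∧ v1 = f1 := by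
  have e3 : v0*f1 = v1*f0 := by
    apply mul_right_cancel₀ hf2
    linear_combination f1*e1 - f0*e2
  obtain ⟨r, s, t, h⟩ := hv
  obtain ⟨r', s', t', h'⟩ := hf
  have d1 : v0 ∣ f0 := ⟨r*f0+s*f1+t*f2, by linear_combination -f0*h - s*e3 - t*e1⟩
  have d2 : f0 ∣ v0 := ⟨r'*v0+s'*v1+t'*v2, by linear_combination -v0*h' + s'*e3 + t'*e1⟩
  have := Int.dvd_antisymm h0.le h0'.le d1 d2
  subst this
  refine ⟨rfl, ?_⟩
  apply mul_left_cancel₀ h0.ne'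
  linear_combination -e3

lemma drep_add {N : ℕ} (hN : 0 < N) {Q1 Q2 : (congruentCurve N).Point}
    {a1 b1 a2 b2 ap bp am bm : ℤ} (h1 : DRep N Q1 a1 b1) (h2 : DRep N Q2 a2 b2)
    (hne : Q1 ≠ Q2) (hne' : Q1 ≠ -Q2)
    (hp : DRep N (Q1 + Q2) ap bp) (hm : DRep N (Q1 - Q2) am bm) :
    ap*am = (a1*a2+b1*b2)^2 ∧ ap*bm+am*bp = 2*(a1*b2+a2*b1)*(a1*a2-b1*b2) := by
  obtain ⟨r0, r1, r2⟩ := rep_add hN h1.1 h2.1 hne hne' hp.1 hm.1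
  have hodd : Odd (a1*a2+b1*b2) := (h1.2.1.mul h2.2.1).add_even (h1.2.2.2.mul_right _)
  have hnz : a1*a2+b1*b2 ≠ 0 := by rintro h0; rw [h0] at hodd; exact absurd hodd (by decide)
  exact prim_eq (primV hp.1.1 hm.1.1) (primF h1.1.1 h2.1.1 h1.2.1 h2.2.1 h1.2.2.2)
    (mul_pos hp.2.2.1 hm.2.2.1) (by positivity) (pow_ne_zero 2 r0) r1 r2

lemma odd_cancel {k : ℕ} {a z : ℤ} (ha : Odd a) (h : (2:ℤ)^k ∣ a * z) : (2:ℤ)^k ∣ z := by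
  have : IsCoprime ((2:ℤ)^k) a := by
    apply IsCoprime.pow_left
    obtain ⟨m, rfl⟩ := ha
    exact ⟨-m, 1, by ring⟩
  exact this.dvd_of_dvd_mul_left h

def LevelC (e : ℕ) (a1 b1 a b : ℤ) (n : ℕ) : Prop :=
  (2:ℤ)^e ∣ b ∧ (2:ℤ)^(2*e) ∣ a - a1^(n^2) ∧ (2:ℤ)^(3*e) ∣ b*a1 - n^2*b1*a

lemma levelC_step {e n : ℕ} {a1 b1 a b a' b' a'' b'' : ℤ} (ha1 : Odd a1) (ha' : Odd a')
    (h1 : (2:ℤ)^e ∣ b1) (h : LevelC e a1 b1 a b (n+1)) (h' : LevelC e a1 b1 a' b' n)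
    (r1 : a''*a' = (a*a1+b*b1)^2) (r2 : a''*b'+a'*b'' = 2*(a*b1+a1*b)*(a*a1-b*b1)) :
    LevelC e a1 b1 a'' b'' (n+2) := by
  obtain ⟨k1, hk1⟩ := h1
  obtain ⟨⟨k, hk⟩, ⟨m, hm⟩, ⟨l, hl⟩⟩ := h
  obtain ⟨⟨k', hk'⟩, ⟨m', hm'⟩, ⟨l', hl'⟩⟩ := h'
  have p2 : (2:ℤ)^(2*e) = 2^e*2^e := by rw [two_mul, pow_add]
  have p3 : (2:ℤ)^(3*e) = 2^e*2^e*2^e := by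
    rw [show 3*e = e+e+e by ring, pow_add, pow_add]
  refine ⟨?_, ?_, ?_⟩
  · apply odd_cancel ha'
    exact ⟨2*(a*k1+a1*k)*(a*a1-b*b1) - a''*k', by
      linear_combination r2 - a''*hk' + 2*(a*a1-b*b1)*(a*hk1 + a1*hk)⟩
  · apply odd_cancel (ha1.pow (n := n^2))
    rw [p2] at hm hm' ⊢
    set M := (2:ℤ)^e
    have q1 : a1^((n+2)^2) * a1^(n^2) = (a1^((n+1)^2))^2 * a1^2 := by
      rw [← pow_add, ← pow_mul, ← pow_add]; congr 1; ring
    have q2 : a1^(n^2) = a' - M*M*m' := by linear_combination -hm'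
    have q3 : a = a1^((n+1)^2) + M*M*m := by linear_combination hm
    have q4 : a1^(n^2) * (a'' - a1^((n+2)^2)) = a''*a' - a''*M*M*m' - (a - M*M*m)^2*a1^2 := by
      rw [mul_sub, mul_comm _ (a1^((n+2)^2)), q1, show a1^((n+1)^2) = a - M*M*m by rw [q3]; ring]
      rw [q2]; ring
    rw [q4, r1, hk, hk1]
    exact ⟨2*a*a1*k*k1 + M*M*k^2*k1^2 - a''*m' + (2*a*m - M*M*m^2)*a1^2, by ring⟩
  · apply odd_cancel ha'
    rw [p3] at hl hl' ⊢
    set M := (2:ℤ)^e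
    push_cast at hl hl' ⊢
    have q : a' * (b''*a1 - (n+2)^2*b1*a'')
      = 2*a*a1*(b*a1 - (n+1)^2*b1*a)*a1 - a''*(b'*a1 - n^2*b1*a')
        - 2*(a*b1+a1*b)*a1*(b*b1)
        + ((n+2)^2+n^2)*b1*((a*a1)^2 - (a*a1+b*b1)^2) := by
      linear_combination a1*r2 - ((n+2)^2+n^2)*b1*r1
    rw [q, hl, hl', hk, hk1]
    exact ⟨2*a*a1*l*a1 - a''*l' - 2*(a*k1+a1*k)*a1*k*k1
      - ((n+2)^2+n^2)*k1*(2*a*a1*k*k1 + M*M*k^2*k1^2), by ring⟩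

lemma nt_ne {N : ℕ} {S : (congruentCurve N).Point} (hS : ∀ n : ℕ, 1 ≤ n → n • S ≠ 0)
    {m n : ℕ} (h : m < n) : n • S ≠ m • S ∧ n • S ≠ -(m • S) := by
  constructor
  · intro e
    apply hS (n - m) (by omega)
    rw [sub_nsmul _ h.le, e, add_neg_cancel]
  · intro e
    apply hS (n + m) (by omega)
    rw [add_nsmul, e, neg_add_cancel]

lemma level_all {N : ℕ} (hN : 0 < N) (hsq : Squarefree N) {S' : (congruentCurve N).Point}
    (hS : ∀ n : ℕ, 1 ≤ n → n • S' ≠ 0) {e : ℕ} {a1 b1 : ℤ}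
    (h1 : DRep N ((2:ℕ) • S') a1 b1) (he : (2:ℤ)^e ∣ b1) (n : ℕ) :
    (∃ a b, DRep N ((n+1) • ((2:ℕ) • S')) a b ∧ LevelC e a1 b1 a b (n+1)) ∧
    (∃ a b, DRep N ((n+2) • ((2:ℕ) • S')) a b ∧ LevelC e a1 b1 a b (n+2)) := by
  have hSS : ∀ n : ℕ, 1 ≤ n → n • ((2:ℕ) • S') ≠ 0 := fun n hn => by
    rw [← mul_nsmul']; exact hS _ (by omega)
  induction n with
  | zero =>
    constructor
    · refine ⟨a1, b1, by simpa using h1, he, by simp, by simp⟩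
    · have := (dbl_rep hN hsq h1.1 (hSS 2 (by norm_num)) h1.1.1 h1.2.1 h1.2.2.2 (by ring)).1
      refine ⟨_, _, this, ?_, ?_, ?_⟩
      · obtain ⟨k, rfl⟩ := he
        exact ⟨4*a1*k*(a1^2-(2^e*k)^2), by ring⟩
      · obtain ⟨k, rfl⟩ := he
        rw [two_mul, pow_add]
        generalize (2:ℤ)^e = M
        exact ⟨2*a1^2*k^2 + M^2*k^4, by ring⟩
      · obtain ⟨k, rfl⟩ := he
        rw [show 3*e = e+e+e by ring, pow_add, pow_add]
        generalize (2:ℤ)^e = M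
        exact ⟨4*k*(-3*a1^2*k^2-M^2*k^4), by push_cast; ring⟩
  | succ n ih =>
    refine ⟨ih.2, ?_⟩
    obtain ⟨⟨a', b', hd', hl'⟩, ⟨a, b, hd, hl⟩⟩ := ih
    have e3 : (n+1+2) • ((2:ℕ) • S') = (2:ℕ) • ((n+1+2) • S') := by
      rw [← mul_nsmul, ← mul_nsmul, mul_comm]
    obtain ⟨a'', b'', hd'', -, -⟩ := dbl_drep hN hsq (Q := (n+1+2) • S')
      (by rw [← e3]; exact hSS _ (by omega))
    rw [← e3] at hd''
    refine ⟨a'', b'', hd'', ?_⟩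
    have hne := nt_ne hSS (m := 1) (n := n+2) (by omega)
    rw [one_nsmul] at hne
    obtain ⟨r1, r2⟩ := drep_add hN hd h1 hne.1 hne.2
      (by rw [show (n+2) • ((2:ℕ) • S') + (2:ℕ) • S' = (n+1+2) • ((2:ℕ) • S') by
            rw [show n+1+2 = (n+2)+1 by ring, succ_nsmul (n := n+2)]]; exact hd'')
      (by rw [show (n+2) • ((2:ℕ) • S') - (2:ℕ) • S' = (n+1) • ((2:ℕ) • S') by
            rw [show n+2 = (n+1)+1 by ring, succ_nsmul (n := n+1), add_sub_cancel_right]]; exact hd')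
    exact levelC_step (n := n+1) h1.2.1 hd'.2.1 he hl hl' r1 r2

def Base (N : ℕ) (Q : (congruentCurve N).Point) (u w : ℤ) : Prop :=
  DRep N ((2:ℕ) • Q) (seqU u w 1).1 (2^3 * (seqU u w 1).2)

lemma base_seq {N : ℕ} (hN : 0 < N) (hsq : Squarefree N) {Q : (congruentCurve N).Point}
    (hQ : ∀ n : ℕ, 1 ≤ n → n • Q ≠ 0) {u w : ℤ} (hb : Base N Q u w) (i : ℕ) :
    DRep N ((2:ℕ)^(i+1) • Q) (seqU u w (i+1)).1 (2^(2*(i+1)+1) * (seqU u w (i+1)).2) := by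
  induction i with
  | zero =>
    rw [zero_add, pow_one]
    exact hb
  | succ i ih =>
    have e2 : (2:ℕ)^(i+1+1) • Q = (2:ℕ) • ((2:ℕ)^(i+1) • Q) := by
      rw [pow_succ (n := i+1), mul_nsmul]
    have := (dbl_rep hN hsq ih.1 (by rw [← e2]; exact hQ _ Nat.one_le_two_pow)
      ih.1.1 ih.2.1 ih.2.2.2 (by ring)).1
    rw [← e2] at this
    rw [show seqU u w (i+1+1) = (((seqU u w (i+1)).1^2 + (2^(2*(i+1)+1) * (seqU u w (i+1)).2)^2)^2,
      (seqU u w (i+1)).1 * (seqU u w (i+1)).2 * ((seqU u w (i+1)).1^2 - (2^(2*(i+1)+1) * (seqU u w (i+1)).2)^2)) from rfl]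
    generalize (seqU u w (i+1)).1 = U at *
    generalize (seqU u w (i+1)).2 = W at *
    have e4 : 4 * U * (2^(2*(i+1)+1) * W) * (U^2 - (2^(2*(i+1)+1) * W)^2)
      = 2^(2*(i+1+1)+1) * (U * W * (U^2 - (2^(2*(i+1)+1) * W)^2)) := by
      rw [show (2:ℤ)^(2*(i+1+1)+1) = 4 * 2^(2*(i+1)+1) by ring]; ring
    rw [e4] at this
    exact this

lemma cong_main {N : ℕ} (hN : 0 < N) (hsq : Squarefree N) {P : (congruentCurve N).Point}
    (hP : ∀ n : ℕ, 1 ≤ n → n • P ≠ 0) {u0 w0 u w : ℤ} (n : ℕ) (hn : 1 ≤ n)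
    (h0 : Base N P u0 w0) (h : Base N (n • P) u w) : CongS u0 w0 u w (n^2) := by
  intro i
  have hnP : ∀ m : ℕ, 1 ≤ m → m • (n • P) ≠ 0 := fun m hm => by
    rw [← mul_nsmul']; exact hP _ (Nat.mul_pos hm hn)
  have b0 := base_seq hN hsq hP h0 i
  have b1 := base_seq hN hsq hnP h i
  obtain ⟨k, rfl⟩ : ∃ k, n = k+1 := ⟨n-1, by omega⟩
  have e2 : (2:ℕ)^(i+1) • P = (2:ℕ) • ((2:ℕ)^i • P) := by
    rw [pow_succ, mul_nsmul]
  have b0' := b0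
  rw [e2] at b0
  obtain ⟨a, b, hd, hl⟩ := (level_all hN hsq (S' := (2:ℕ)^i • P) (e := 2*(i+1)+1)
    (fun m hm => by rw [← mul_nsmul']; exact hP _ (Nat.mul_pos hm (by positivity)))
    b0 ⟨_, rfl⟩ k).1
  rw [← e2, ← mul_nsmul', mul_comm, mul_nsmul'] at hd
  obtain ⟨rfl, rfl⟩ := drep_unique hN hd b1
  obtain ⟨-, l1, l2⟩ := hl
  rw [show 2*(i+1)+1 = 2*i+3 by ring] at *
  refine ⟨l1, ?_⟩
  generalize (seqU u w (i+1)).1 = U at *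
  generalize (seqU u w (i+1)).2 = W at *
  generalize (seqU u0 w0 (i+1)).1 = U0 at *
  generalize (seqU u0 w0 (i+1)).2 = W0 at *
  have e3 : (2:ℤ)^(3*(2*i+3)) = 2^(2*i+3) * 2^(2*(2*i+3)) := by
    rw [← pow_add]; congr 1; ring
  rw [e3, show 2^(2*i+3) * W * U0 - ((k+1:ℕ):ℤ)^2 * (2^(2*i+3)*W0) * U
    = 2^(2*i+3) * (W * U0 - (((k+1)^2 : ℕ):ℤ) * W0 * U) by push_cast; ring] at l2
  exact (mul_dvd_mul_iff_left (by positivity)).1 l2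

lemma int_dvd {N : ℕ} {Q : (congruentCurve N).Point} {a b : ℤ}
    (hQ : IsIntegralPoint Q) (h : CRep N Q a b) : b ∣ N := by
  obtain ⟨x, y, hh, rfl, hden⟩ := hQ
  obtain ⟨hc, x', y', hh', e, hb, e'⟩ := h
  rw [Point.some.injEq] at e
  obtain ⟨rfl, rfl⟩ := e
  rw [← Rat.coe_int_num_of_den_eq_one hden] at e'
  have e2 : x.num * b = N * a := by exact_mod_cast e'
  exact hc.symm.dvd_of_dvd_mul_right ⟨x.num, by rw [← e2]; ring⟩

lemma not_four_dvd {N : ℕ} (hsq : Squarefree N) : ¬ (4:ℤ) ∣ N := by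
  intro h
  have h' : 4 ∣ N := by exact_mod_cast h
  have := hsq 2 h'
  rw [Nat.isUnit_iff] at this
  omega

lemma odd_of_int {N : ℕ} (hN : 0 < N) (hsq : Squarefree N) {P : (congruentCurve N).Point}
    (hP : ∀ n : ℕ, 1 ≤ n → n • P ≠ 0) {n : ℕ} (hn : 1 ≤ n) (h : IsIntegralPoint (n • P)) :
    Odd n := by
  by_contra ho
  rw [Nat.not_odd_iff_even] at ho
  obtain ⟨k, rfl⟩ := ho
  have e : (k + k) • P = (2:ℕ) • (k • P) := by rw [add_nsmul, two_nsmul]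
  have h0 := hP _ hn
  rw [e] at h h0
  obtain ⟨a, b, hd, -, h8⟩ := dbl_drep hN hsq h0
  have := int_dvd h hd.1
  exact not_four_dvd hsq ((show (4:ℤ) ∣ 8 by norm_num).trans (h8.trans this))

lemma compare {N : ℕ} (hN : 0 < N) (hsq : Squarefree N) {P : (congruentCurve N).Point}
    (hP : ∀ n : ℕ, 1 ≤ n → n • P ≠ 0) {n : ℕ} (hn : 1 < n) {α0 β0 α β : ℤ}
    (h0 : IsIntegralPoint P) (h : IsIntegralPoint (n • P))
    (r0 : CRep N P α0 β0) (r : CRep N (n • P) α β) (hβ0 : 0 < β0) (hβ : 0 < β) :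
    β = β0 ∧ 8 ∣ β0 * (α - α0) ∧ α ≠ α0 := by
  obtain ⟨k, rfl⟩ := odd_of_int hN hsq hP hn.le h
  have hne := nt_ne hP (m := 1) hn
  rw [one_nsmul] at hne
  have ep : (2*k+1) • P + P = (2:ℕ) • ((k+1) • P) := by
    rw [← succ_nsmul, ← mul_nsmul]; congr 1; ring
  have em : (2*k+1) • P - P = (2:ℕ) • (k • P) := by
    rw [succ_nsmul, add_sub_cancel_right, ← mul_nsmul]; congr 1; ring
  obtain ⟨ap, bp, dp, np, p8⟩ := dbl_drep hN hsq (Q := (k+1) • P)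
    (by rw [← mul_nsmul]; exact hP _ (by omega))
  obtain ⟨am, bm, dm, nm, m8⟩ := dbl_drep hN hsq (Q := k • P)
    (by rw [← mul_nsmul]; exact hP _ (by omega))
  rw [← ep] at dp
  rw [← em] at dm
  obtain ⟨hδ, key, -⟩ := rep_add hN r r0 hne.1 hne.2 dp.1 dm.1
  have gen : ∀ z : ℤ, z ∣ bp → z ∣ bm → z ∣ α*β0 - α0*β := by
    intro z hz1 hz2
    have c1 : IsCoprime z ap := (dp.1.1.symm).of_isCoprime_of_dvd_left hz1
    have c2 : IsCoprime z am := (dm.1.1.symm).of_isCoprime_of_dvd_left hz2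
    have d : z^2 ∣ (ap*am) * (α*β0-α0*β)^2 := by
      rw [key, pow_two]; exact (mul_dvd_mul hz1 hz2).mul_right _
    have := ((c1.mul_right c2).pow_left (m := 2)).dvd_of_dvd_mul_left d
    exact (Int.pow_dvd_pow_iff (by norm_num)).1 this
  have d8 := gen 8 p8 m8
  have dN := gen N np nm
  have i0 := int_dvd h0 r0
  have i1 := int_dvd h r
  have e1 : β0 ∣ β := by
    have := (dvd_sub_right (Dvd.intro_left α rfl)).1 (i0.trans dN)
    exact r0.1.symm.dvd_of_dvd_mul_left this
  have e2 : β ∣ β0 := by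
    have := (dvd_sub_left (Dvd.intro_left α0 rfl)).1 (i1.trans dN)
    exact r.1.symm.dvd_of_dvd_mul_left this
  have := Int.dvd_antisymm hβ.le hβ0.le e2 e1
  subst this
  refine ⟨rfl, by rwa [show α*β - α0*β = β*(α-α0) by ring] at d8, ?_⟩
  rintro rfl
  exact hδ (sub_self _)

lemma base_of {N : ℕ} (hN : 0 < N) (hsq : Squarefree N) {Q : (congruentCurve N).Point}
    (hQ : (2:ℕ) • Q ≠ 0) {α β u w : ℤ} (r : CRep N Q α β) (hu : Odd u) (huw : IsCoprime u (2*w))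
    (he : (u^2+(2*w)^2)^2 * (4*α*β*(α^2-β^2)) = 4*u*(2*w)*(u^2-(2*w)^2) * (α^2+β^2)^2) :
    Base N Q u w := by
  have := (dbl_rep hN hsq r hQ huw hu ⟨w, two_mul w⟩ he).1
  unfold Base
  simp only [seqU]
  convert this using 1 <;> ring

lemma nondeg {N : ℕ} {P : (congruentCurve N).Point} (hP : (2:ℕ) • P ≠ 0) {α β : ℤ}
    (r : CRep N P α β) : α ≠ 0 ∧ α ≠ β ∧ α ≠ -β := by
  obtain ⟨hc, x, y, h, rfl, hb, e⟩ := r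
  have hq := cc_eq h
  have hb' : (β:ℚ) ≠ 0 := by exact_mod_cast hb
  have hy : y ≠ 0 := fun hy => hP (cc_dbl_zero h hy)
  have hx : x ≠ 0 ∧ x - N ≠ 0 ∧ x + N ≠ 0 := by
    have : x * (x-N) * (x+N) ≠ 0 := by
      rw [show x * (x-N) * (x+N) = y^2 by rw [hq]; ring]; exact pow_ne_zero 2 hy
    exact ⟨fun h => this (by rw [h]; ring), fun h => this (by rw [h]; ring),
      fun h => this (by rw [h]; ring)⟩
  refine ⟨?_, ?_, ?_⟩
  · rintro rfl
    simp at e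
    exact e.elim hx.1 hb
  · rintro rfl
    exact hx.2.1 (by have := mul_right_cancel₀ hb' e; rw [this, sub_self])
  · rintro rfl
    apply hx.2.2
    apply mul_right_cancel₀ hb'
    push_cast at e
    linear_combination e

lemma main_nat {N : ℕ} (hN : 0 < N) (hsq : Squarefree N) {P : (congruentCurve N).Point}
    (hP : ∀ n : ℕ, 1 ≤ n → n • P ≠ 0) (h0 : IsIntegralPoint P) {n1 n2 : ℕ}
    (hn1 : 1 < n1) (hn2 : 1 < n2) (h1 : IsIntegralPoint (n1 • P)) (h2 : IsIntegralPoint (n2 • P))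
    (hlt : n1 < n2) : False := by
  obtain ⟨α0, β, r0, hβ⟩ := rep_exists hN P (by simpa using hP 1 le_rfl)
  obtain ⟨α1, β1, r1, hβ1⟩ := rep_exists hN (n1 • P) (hP _ hn1.le)
  obtain ⟨α2, β2, r2, hβ2⟩ := rep_exists hN (n2 • P) (hP _ hn2.le)
  obtain ⟨rfl, k1, ne1⟩ := compare hN hsq hP hn1 h0 h1 r0 r1 hβ hβ1
  obtain ⟨rfl, k2, ne2⟩ := compare hN hsq hP hn2 h0 h2 r0 r2 hβ hβ2
  have ne12 : α2 ≠ α1 := by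
    rintro rfl
    obtain ⟨-, x, y, hh, e, hb, e'⟩ := r1
    obtain ⟨-, x2, y2, hh2, e2, hb2, e2'⟩ := r2
    have hb' : (β2:ℚ) ≠ 0 := by exact_mod_cast hb
    have : x2 = x := mul_right_cancel₀ hb' (by rw [e', e2'])
    have hne := nt_ne hP hlt
    rw [e, e2] at hne
    rcases (Point.X_eq_iff (h₁ := hh2) (h₂ := hh)).1 this with h | h
    · exact hne.1 h
    · exact hne.2 h
  have hP2 := hP 2 (by norm_num)
  have hP21 : (2:ℕ) • (n1 • P) ≠ 0 := by rw [← mul_nsmul']; exact hP _ (by omega)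
  have hP22 : (2:ℕ) • (n2 • P) ≠ 0 := by rw [← mul_nsmul']; exact hP _ (by omega)
  obtain ⟨nd0, nd1, nd2⟩ := nondeg hP2 r0
  have hdvd := int_dvd h0 r0
  rename' β2 => β
  rcases Int.even_or_odd β with hev | hodd
  · -- regime 2
    obtain ⟨b, hb⟩ := hev
    have hbo : Odd b := by
      by_contra hbe
      rw [Int.not_odd_iff_even] at hbe
      obtain ⟨c, hc⟩ := hbe
      exact not_four_dvd hsq (Dvd.dvd.trans ⟨c, by rw [hb, hc]; ring⟩ hdvd)
    have hαo : ∀ α, IsCoprime α β → Odd α := by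
      rintro α ⟨s, t, hst⟩
      by_contra hbe
      rw [Int.not_odd_iff_even] at hbe
      obtain ⟨c, hc⟩ := hbe
      rw [hb, hc] at hst
      have : 2 * (s*c + t*b) = 1 := by linear_combination hst
      omega
    have d4 : (4:ℤ) ∣ α1 - α0 := by
      have h8 : (8:ℤ) ∣ 2 * (b*(α1-α0)) := by
        rwa [show β*(α1-α0) = 2*(b*(α1-α0)) by rw [hb]; ring] at k1
      have : (2:ℤ)^2 ∣ b * (α1-α0) := by omega
      have := odd_cancel hbo this
      norm_num at this; exact this
    obtain ⟨z, hz⟩ := d4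
    have hα1 : α1 = α0 + 4*z := by linarith
    have hβ2b : β = 2*b := by linarith
    have B0 : Base N P (α0+4*0) b := base_of hN hsq hP2 r0 (by simpa using hαo _ r0.1)
      (by rw [← hβ2b]; simpa using r0.1) (by rw [← hβ2b]; ring)
    have B1 : Base N (n1 • P) (α0+4*z) b := base_of hN hsq hP21 r1
      (by rw [← hα1]; exact hαo _ r1.1)
      (by rw [← hβ2b, ← hα1]; exact r1.1) (by rw [← hβ2b, ← hα1]; ring)
    have := regime2 α0 b 0 z _ (hαo _ r0.1) hbo (cong_main hN hsq hP n1 hn1.le B0 B1)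
    apply ne1; rw [hα1]; linarith
  · have d1 : (2:ℤ)^3 ∣ α1 - α0 := odd_cancel hodd (by norm_num; exact k1)
    have d2 : (2:ℤ)^3 ∣ α2 - α0 := odd_cancel hodd (by norm_num; exact k2)
    norm_num at d1 d2
    rcases Int.even_or_odd α0 with hae | hao
    · -- regime 1
      have B : ∀ (Q : (congruentCurve N).Point) (α z : ℤ), (2:ℕ) • Q ≠ 0 → CRep N Q α β →
          α = 2*z → Base N Q β (-z) := by
        intro Q α z hQ r hα
        refine base_of hN hsq hQ r hodd ?_ (by rw [hα]; ring)
        rw [show 2 * -z = -α by rw [hα]; ring]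
        exact r.1.symm.neg_right
      obtain ⟨z0, hz0⟩ : ∃ z, α0 = 2*z := ⟨α0/2, by obtain ⟨c, hc⟩ := hae; omega⟩
      obtain ⟨z1, hz1⟩ : ∃ z, α1 = 2*z := ⟨α1/2, by omega⟩
      obtain ⟨z2, hz2⟩ : ∃ z, α2 = 2*z := ⟨α2/2, by omega⟩
      have := regime1 β z0 z1 z2 _ _ hodd
        (cong_main hN hsq hP n1 hn1.le (B _ _ _ hP2 r0 hz0) (B _ _ _ hP21 r1 hz1))
        (cong_main hN hsq hP n2 hn2.le (B _ _ _ hP2 r0 hz0) (B _ _ _ hP22 r2 hz2))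
      simp only [mul_eq_zero] at this
      omega
    · -- regime 3
      obtain ⟨σ, hσ, hd⟩ : ∃ σ : ℤ, (σ = 1 ∨ σ = -1) ∧ 4 ∣ α0 - σ*β := by
        obtain ⟨c, hc⟩ := hodd
        obtain ⟨d, hd⟩ := hao
        by_cases h : (4:ℤ) ∣ α0 - 1*β
        · exact ⟨1, Or.inl rfl, h⟩
        · exact ⟨-1, Or.inr rfl, by omega⟩
      have B : ∀ (Q : (congruentCurve N).Point) (α z : ℤ), (2:ℕ) • Q ≠ 0 → CRep N Q α β →
          α = σ*β + 4*z → Base N Q (β+2*σ*z) z := by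
        intro Q α z hQ r hα
        have ho : Odd (β+2*σ*z) := hodd.add_even ⟨σ*z, by ring⟩
        obtain ⟨s, t, hst⟩ := r.1
        refine base_of hN hsq hQ r ho ?_ ?_
        · rcases hσ with rfl | rfl
          · exact ⟨s+t, s-t, by rw [hα] at hst; linear_combination hst⟩
          · exact ⟨t-s, s+t, by rw [hα] at hst; linear_combination hst⟩
        · rcases hσ with rfl | rfl <;> rw [hα] <;> ring
      obtain ⟨z0, hz0⟩ : ∃ z, α0 = σ*β + 4*z := ⟨(α0-σ*β)/4, by omega⟩
      obtain ⟨z1, hz1⟩ : ∃ z, α1 = σ*β + 4*z := ⟨(α1-σ*β)/4, by omega⟩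
      obtain ⟨z2, hz2⟩ : ∃ z, α2 = σ*β + 4*z := ⟨(α2-σ*β)/4, by omega⟩
      have := regime3 β σ z0 z1 z2 _ _ hodd hσ
        (cong_main hN hsq hP n1 hn1.le (B _ _ _ hP2 r0 hz0) (B _ _ _ hP21 r1 hz1))
        (cong_main hN hsq hP n2 hn2.le (B _ _ _ hP2 r0 hz0) (B _ _ _ hP22 r2 hz2))
      simp only [mul_eq_zero] at this
      rcases hσ with rfl | rfl <;> omega

end CurvePart

theorem stmt0 (N : ℕ) (hN : 0 < N) (hsq : Squarefree N)
    (P : (congruentCurve N).Point)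
    (hPint : IsIntegralPoint P)
    (hPtors : ∀ n : ℤ, 1 ≤ n → n • P ≠ 0)
    (n₁ n₂ : ℤ) (hn₁ : 1 < n₁) (hn₂ : 1 < n₂)
    (h₁ : IsIntegralPoint (n₁ • P)) (h₂ : IsIntegralPoint (n₂ • P)) :
    n₁ = n₂ := by
  have hP : ∀ n : ℕ, 1 ≤ n → n • P ≠ 0 := fun n hn => by
    have := hPtors n (by exact_mod_cast hn)
    rwa [natCast_zsmul] at this
  lift n₁ to ℕ using (by omega)
  lift n₂ to ℕ using (by omega)
  rw [natCast_zsmul] at h₁ h₂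
  have k₁ : 1 < n₁ := by exact_mod_cast hn₁
  have k₂ : 1 < n₂ := by exact_mod_cast hn₂
  rcases lt_trichotomy n₁ n₂ with h | h | h
  · exact (main_nat hN hsq hP hPint k₁ k₂ h₁ h₂ h).elim
  · exact_mod_cast h
  · exact (main_nat hN hsq hP hPint k₂ k₁ h₂ h₁ h).elim
end

section
/- Let N be a positive squarefree integer and let P be a non-torsion point of E_N(ℚ) whose x-coordinate is an integer. Then 2P is not integral; in fact the x-coordinate of 2P is not an integer (its 2-adic valuation is negative). -/
theorem dyadic_aux (N : ℤ) (hN : ¬ (4:ℤ) ∣ N) (a b : ℤ) (h : b ^ 2 = a ^ 3 - N ^ 2 * a) :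
    ∃ (k : ℕ) (u w : ℤ), a ^ 2 + N ^ 2 = 2 ^ k * (2 * u + 1) ∧ b = 2 ^ k * w := by
  have dvd_sq : ∀ (k : ℕ) (z : ℤ), ((2:ℤ) ^ k) ^ 2 ∣ z ^ 2 → (2:ℤ) ^ k ∣ z := fun k z hz =>
    (Int.pow_dvd_pow_iff two_ne_zero).1 hz
  have even_mul : ∀ z : ℤ, ∃ t, z * (z + 1) = 2 * t := fun z => by
    obtain ⟨t, ht⟩ := Int.even_mul_succ_self z
    exact ⟨t, by linarith⟩
  rcases Int.even_or_odd' N with ⟨m, hm | hm⟩ <;> rcases Int.even_or_odd' a with ⟨c, hc | hc⟩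
  · rcases Int.even_or_odd' m with ⟨n, hn | hn⟩
    · exact absurd ⟨n, by rw [hm, hn]; ring⟩ hN
    · rcases Int.even_or_odd' c with ⟨d, hd | hd⟩
      · obtain ⟨w, hw⟩ := dvd_sq 2 b ⟨d * (4 * d ^ 2 - (2 * n + 1) ^ 2), by
          rw [h, hm, hc, hn, hd]; ring⟩
        exact ⟨2, 2 * d ^ 2 + 2 * n ^ 2 + 2 * n, w, by rw [hm, hc, hn, hd]; ring, hw⟩
      · obtain ⟨s, hs⟩ := even_mul d
        obtain ⟨t, ht⟩ := even_mul n
        obtain ⟨w, hw⟩ := dvd_sq 3 b ⟨(2 * d + 1) * (s - t), by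
          rw [h, hm, hc, hn, hd]; linear_combination 32 * (2 * d + 1) * (hs - ht)⟩
        exact ⟨3, 2 * s + 2 * t, w, by rw [hm, hc, hn, hd]; linear_combination 16 * (hs + ht), hw⟩
  · exact ⟨0, 2 * c ^ 2 + 2 * c + 2 * m ^ 2, b, by rw [hm, hc]; ring, by ring⟩
  · exact ⟨0, 2 * c ^ 2 + 2 * m ^ 2 + 2 * m, b, by rw [hm, hc]; ring, by ring⟩
  · obtain ⟨w, hw⟩ := dvd_sq 1 b ⟨(2 * c + 1) * (c ^ 2 + c - m ^ 2 - m), by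
      rw [h, hm, hc]; ring⟩
    exact ⟨1, c ^ 2 + c + m ^ 2 + m, w, by rw [hm, hc]; ring, hw⟩

theorem val_aux (u w : ℤ) (hw : w ≠ 0) :
    padicValRat 2 ((((2 * u + 1 : ℤ) : ℚ) / ((2 * w : ℤ) : ℚ)) ^ 2) < 0 := by
  have : Fact (Nat.Prime 2) := ⟨Nat.prime_two⟩
  have h1 : (2 * u + 1 : ℤ) ≠ 0 := by omega
  have h2 : (2 * w : ℤ) ≠ 0 := by omega
  have h1' : ((2 * u + 1 : ℤ) : ℚ) ≠ 0 := by exact_mod_cast h1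
  have h2' : ((2 * w : ℤ) : ℚ) ≠ 0 := by exact_mod_cast h2
  rw [padicValRat.pow, padicValRat.div h1' h2', padicValRat.of_int,
    padicValRat.of_int, padicValInt.eq_zero_of_not_dvd (p := 2) (z := 2 * u + 1) (by push_cast; omega)]
  have : 1 ≤ padicValInt 2 (2 * w) := by
    have := (padicValInt_dvd_iff (p := 2) 1 (2 * w)).1 (by simp)
    tauto
  push_cast
  omega

theorem stmt1 (N : ℕ) (hN : 0 < N) (hsq : Squarefree N)
    (a b : ℤ) (h : (congruentCurve N).Nonsingular (a : ℚ) (b : ℚ))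
    (hPtors : ∀ n : ℤ, 1 ≤ n →
      n • (WeierstrassCurve.Affine.Point.some _ _ h) ≠ 0) :
    ∃ (x y : ℚ) (h' : (congruentCurve N).Nonsingular x y),
      (2 : ℤ) • (WeierstrassCurve.Affine.Point.some _ _ h) =
        WeierstrassCurve.Affine.Point.some _ _ h' ∧
      x.den ≠ 1 ∧ padicValRat 2 x < 0 := by
  have heq : (b:ℚ) ^ 2 = a ^ 3 - N ^ 2 * a := by
    have := (WeierstrassCurve.Affine.equation_iff ..).1 h.1
    simp only [congruentCurve] at this
    linear_combination this
  have heqZ : b ^ 2 = a ^ 3 - (N:ℤ) ^ 2 * a := by exact_mod_cast heq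
  have h4 : ¬ (4:ℤ) ∣ N := by
    intro h4
    have h4' : 2 * 2 ∣ N := by exact_mod_cast h4
    have := hsq 2 h4'
    simp at this
  have hne : (b:ℚ) ≠ (congruentCurve N).negY a b := by
    intro hb
    apply hPtors 2 (by norm_num)
    rw [two_zsmul]
    exact WeierstrassCurve.Affine.Point.add_self_of_Y_eq hb
  have hb0 : (b:ℚ) ≠ 0 := by
    intro hb
    apply hne
    simp [WeierstrassCurve.Affine.negY, congruentCurve, hb]
  have hval : ∀ x : ℚ, padicValRat 2 x < 0 → x.den ≠ 1 ∧ padicValRat 2 x < 0 := by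
    intro x hx
    refine ⟨fun hd => ?_, hx⟩
    rw [← Rat.coe_int_num_of_den_eq_one hd, padicValRat.of_int] at hx
    omega
  obtain ⟨k, u, w, h1, h2⟩ := dyadic_aux N h4 a b heqZ
  have hw : w ≠ 0 := by
    rintro rfl
    apply hb0
    rw [h2]; simp
  refine ⟨_, _, _, by rw [two_zsmul]; exact WeierstrassCurve.Affine.Point.add_self_of_Y_ne hne, ?_⟩
  apply hval
  convert val_aux u w hw using 2
  have hs := WeierstrassCurve.Affine.slope_of_Y_ne (W := congruentCurve N) (x₁ := (a:ℚ)) (x₂ := a) rfl hne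
  rw [hs]
  have h1' : (a:ℚ) ^ 2 + N ^ 2 = 2 ^ k * (2 * u + 1) := by exact_mod_cast h1
  have h2' : (b:ℚ) = 2 ^ k * w := by exact_mod_cast h2
  have hw' : (w:ℚ) ≠ 0 := by exact_mod_cast hw
  have e : (((2 * u + 1 : ℤ) : ℚ) / ((2 * w : ℤ) : ℚ)) = (a ^ 2 + N ^ 2) / (2 * b) := by
    rw [h1', h2']; push_cast; field_simp
  rw [e]
  simp only [WeierstrassCurve.Affine.addX, WeierstrassCurve.Affine.negY, congruentCurve]
  have e2 : (b:ℚ) - (-b - 0 * a - 0) = 2 * b := by ring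
  rw [e2]
  field_simp
  linear_combination (-8 * (a:ℚ)) * heq
end

section
/- Let N ≥ 1 be an integer and consider the curve E_N : y² = x³ − N²·x over ℂ. Let n ≥ 1 be an integer and let Q = (x_Q, y_Q) be an affine point of E_N(ℂ) with nQ = O (i.e. Q is a point of order dividing n, other than the identity). Then |x_Q| ≤ (1/2)·n²·N. -/
/-- The curve `E_N : y² = x³ - N²x` over `ℂ`. -/
def congruentCurveC (N : ℕ) : WeierstrassCurve.Affine ℂ :=
  { a₁ := 0, a₂ := 0, a₃ := 0, a₄ := -(N : ℂ) ^ 2, a₆ := 0 }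

theorem step_alg (N x1 y1 x2 y2 xm xp a b c : ℂ) (hN : N ≠ 0)
    (e1 : y1 ^ 2 = x1 ^ 3 - N ^ 2 * x1) (e2 : y2 ^ 2 = x2 ^ 3 - N ^ 2 * x2) (hne : x2 ≠ x1)
    (hm : xm = ((y2 + y1) / (x2 - x1)) ^ 2 - x2 - x1)
    (hp : xp = ((y2 - y1) / (x2 - x1)) ^ 2 - x2 - x1)
    (ha : x1 * a = N) (hb : x2 * b = N) (hc : xm * c = N) (hab : 1 + a * b ≠ 0) :
    xp * (2 * (a + b) * (1 - a * b) / (1 + a * b) ^ 2 - c) = N := by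
  have hx1 : x1 ≠ 0 := by rintro rfl; exact hN (by rw [← ha]; ring)
  have hx2 : x2 ≠ 0 := by rintro rfl; exact hN (by rw [← hb]; ring)
  have hxm : xm ≠ 0 := by rintro rfl; exact hN (by rw [← hc]; ring)
  have hd : x2 - x1 ≠ 0 := sub_ne_zero.mpr hne
  have ea : a = N / x1 := by field_simp; linear_combination ha
  have eb : b = N / x2 := by field_simp; linear_combination hb
  have ec : c = N / xm := by field_simp; linear_combination hc
  have hm' : xm * (x2 - x1) ^ 2 = (y2 + y1) ^ 2 - (x2 + x1) * (x2 - x1) ^ 2 := by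
    rw [hm]; field_simp; ring
  have hp' : xp * (x2 - x1) ^ 2 = (y2 - y1) ^ 2 - (x2 + x1) * (x2 - x1) ^ 2 := by
    rw [hp]; field_simp; ring
  have hsum : (xm + xp) * (x2 - x1) ^ 2 = 2 * (x1 + x2) * (x1 * x2 - N ^ 2) := by
    linear_combination hm' + hp' + 2 * e1 + 2 * e2
  have hprod : (xm * xp) * (x2 - x1) ^ 2 = (x1 * x2 + N ^ 2) ^ 2 := by
    have : (xm * xp) * (x2 - x1) ^ 2 * (x2 - x1) ^ 2
        = (x1 * x2 + N ^ 2) ^ 2 * (x2 - x1) ^ 2 := by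
      have h1 : (xm * xp) * (x2 - x1) ^ 2 * (x2 - x1) ^ 2 =
        ((y2 + y1) ^ 2 - (x2 + x1) * (x2 - x1) ^ 2) * ((y2 - y1) ^ 2 - (x2 + x1) * (x2 - x1) ^ 2) := by
        rw [← hm', ← hp']; ring
      rw [h1]
      have h2 : ((y2 + y1) ^ 2 - (x2 + x1) * (x2 - x1) ^ 2) * ((y2 - y1) ^ 2 - (x2 + x1) * (x2 - x1) ^ 2)
        = (y2 ^ 2 - y1 ^ 2) ^ 2 - 2 * (x2 + x1) * (x2 - x1) ^ 2 * (y2 ^ 2 + y1 ^ 2)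
          + (x2 + x1) ^ 2 * (x2 - x1) ^ 4 := by ring
      rw [h2, e1, e2]; ring
    exact mul_right_cancel₀ (pow_ne_zero 2 hd) this
  have hS : x1 * x2 + N ^ 2 ≠ 0 := by
    intro h0; apply hab
    rw [ea, eb]; field_simp; linear_combination h0
  have key : 2 * (a + b) * (1 - a * b) / (1 + a * b) ^ 2
      = N * (2 * (x1 + x2) * (x1 * x2 - N ^ 2)) / (x1 * x2 + N ^ 2) ^ 2 := by
    have h1 : 1 + a * b = (x1 * x2 + N ^ 2) / (x1 * x2) := by rw [ea, eb]; field_simp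
    have h2 : a + b = N * (x1 + x2) / (x1 * x2) := by rw [ea, eb]; field_simp; ring
    have h3 : 1 - a * b = (x1 * x2 - N ^ 2) / (x1 * x2) := by rw [ea, eb]; field_simp
    rw [h1, h2, h3]; field_simp
  have hxp : xp ≠ 0 := by
    rintro rfl
    apply pow_ne_zero 2 hS
    rw [← hprod]; ring
  rw [key, ← hsum, ← hprod, ec]
  field_simp
  ring

theorem dup_alg (N x y a : ℂ) (hN : N ≠ 0) (hy : y ≠ 0)
    (e1 : y ^ 2 = x ^ 3 - N ^ 2 * x)
    (ha : x * a = N) (hab : 1 + a * a ≠ 0) :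
    (((3 * x ^ 2 - N ^ 2) / (2 * y)) ^ 2 - x - x) *
      (2 * (a + a) * (1 - a * a) / (1 + a * a) ^ 2) = N := by
  have hx1 : x ≠ 0 := by rintro rfl; exact hN (by rw [← ha]; ring)
  have ea : a = N / x := by field_simp; linear_combination ha
  have h1 : 1 + a * a = (x ^ 2 + N ^ 2) / x ^ 2 := by rw [ea]; field_simp
  have hS : x ^ 2 + N ^ 2 ≠ 0 := by
    intro h0; apply hab; rw [h1, h0]; simp
  have h3 : 1 - a * a = (x ^ 2 - N ^ 2) / x ^ 2 := by rw [ea]; field_simp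
  have hX : ((3 * x ^ 2 - N ^ 2) / (2 * y)) ^ 2 - x - x = (x ^ 2 + N ^ 2) ^ 2 / (4 * y ^ 2) := by
    field_simp
    linear_combination (-32 * x) * e1
  have hy2 : x ^ 3 - N ^ 2 * x ≠ 0 := by rw [← e1]; exact pow_ne_zero 2 hy
  have hy3 : x ^ 2 - N ^ 2 ≠ 0 := by
    intro h0; apply hy2; linear_combination x * h0
  have hf : x ^ 3 - N ^ 2 * x = x * (x ^ 2 - N ^ 2) := by ring
  rw [hX, e1, h1, h3, hf, ea]
  field_simp
  ring

noncomputable def useq (a : ℂ) : ℕ → ℂ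
  | 0 => 0
  | 1 => a
  | (k + 2) => 2 * (a + useq a (k + 1)) * (1 - a * useq a (k + 1)) / (1 + a * useq a (k + 1)) ^ 2
      - useq a k

theorem size_of (a u : ℂ) (r k : ℝ) (hr : ‖a‖ = r) (hk : 0 ≤ k)
    (hK : (k ^ 2 + 1) * r ≤ 1 / 2)
    (hu : ‖u - (k : ℂ) ^ 2 * a‖ ≤ 2 / 5 * r ^ 3 * k ^ 6) :
    ‖u‖ ≤ 11 / 10 * (k ^ 2 * r) := by
  have hr0 : 0 ≤ r := hr ▸ norm_nonneg a
  have h1 : ‖u‖ ≤ ‖u - (k : ℂ) ^ 2 * a‖ + ‖(k : ℂ) ^ 2 * a‖ := by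
    have := norm_add_le (u - (k : ℂ) ^ 2 * a) ((k : ℂ) ^ 2 * a)
    rwa [sub_add_cancel] at this
  have h2 : ‖(k : ℂ) ^ 2 * a‖ = k ^ 2 * r := by
    rw [norm_mul, norm_pow, Complex.norm_real, hr, Real.norm_of_nonneg hk]
  have hkr : 0 ≤ k ^ 2 * r := by positivity
  have h3 : k ^ 2 * r ≤ 1 / 2 := by nlinarith
  have h4 : (k ^ 2 * r) ^ 2 ≤ 1 / 4 := by nlinarith
  have h5 : 2 / 5 * r ^ 3 * k ^ 6 ≤ 1 / 10 * (k ^ 2 * r) := by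
    have : 2 / 5 * r ^ 3 * k ^ 6 = 2 / 5 * (k ^ 2 * r) * (k ^ 2 * r) ^ 2 := by ring
    rw [this]
    nlinarith
  linarith

theorem err_bound (a u : ℂ) (r k : ℝ) (hr : ‖a‖ = r) (hk : 1 ≤ k)
    (hK : (k ^ 2 + 1) * r ≤ 1 / 2)
    (hu : ‖u‖ ≤ 11 / 10 * (k ^ 2 * r)) :
    1 + a * u ≠ 0 ∧
    ‖2 * (a + u) * (1 - a * u) / (1 + a * u) ^ 2 - 2 * (a + u)‖
      ≤ 12 * r ^ 3 * (k ^ 2 * (k ^ 2 + 1)) := by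
  have hr0 : 0 ≤ r := hr ▸ norm_nonneg a
  have hkr : 0 ≤ k ^ 2 * r := by positivity
  have hk2 : 1 ≤ k ^ 2 := by nlinarith
  have hr4 : r ≤ 1 / 4 := by nlinarith
  have h3 : k ^ 2 * r ≤ 1 / 2 := by nlinarith
  have hv : ‖a * u‖ ≤ 11 / 10 * (k ^ 2 * r ^ 2) := by
    rw [norm_mul, hr]; nlinarith
  have hv2 : ‖a * u‖ ≤ 7 / 50 := by
    have : k ^ 2 * r ^ 2 ≤ 1 / 8 := by
      have : k ^ 2 * r ^ 2 = (k ^ 2 * r) * r := by ring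
      rw [this]; nlinarith
    linarith
  set v := a * u with hvdef
  have hlow : 43 / 50 ≤ ‖1 + v‖ := by
    have := norm_sub_norm_le (1 : ℂ) (-v)
    rw [norm_neg, sub_neg_eq_add, norm_one] at this
    linarith
  have hne : 1 + v ≠ 0 := by
    intro h0; rw [h0, norm_zero] at hlow; linarith
  refine ⟨hne, ?_⟩
  have e : 2 * (a + u) * (1 - v) / (1 + v) ^ 2 - 2 * (a + u)
      = -(2 * (a + u) * v * (3 + v)) / (1 + v) ^ 2 := by
    field_simp; ring
  rw [e, norm_div, norm_neg, norm_mul, norm_mul, norm_mul, norm_pow]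
  have hD : 0 < ‖1 + v‖ ^ 2 := by positivity
  rw [div_le_iff₀ hD]
  have hD2 : 0.7396 ≤ ‖1 + v‖ ^ 2 := by nlinarith
  have hs : ‖a + u‖ ≤ 11 / 10 * ((k ^ 2 + 1) * r) := by
    have := norm_add_le a u
    rw [hr] at this
    nlinarith
  have h3v : ‖3 + v‖ ≤ 157 / 50 := by
    have := norm_add_le 3 v
    have h33 : ‖(3 : ℂ)‖ = 3 := by norm_num
    rw [h33] at this; linarith
  have h22 : ‖(2 : ℂ)‖ = 2 := by norm_num
  rw [h22]
  set T := r ^ 3 * (k ^ 2 * (k ^ 2 + 1)) with hT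
  have hT0 : 0 ≤ T := by positivity
  calc 2 * ‖a + u‖ * ‖v‖ * ‖3 + v‖
      ≤ 2 * (11 / 10 * ((k ^ 2 + 1) * r)) * (11 / 10 * (k ^ 2 * r ^ 2)) * (157 / 50) := by gcongr
    _ = 2 * 1.21 * 3.14 * T := by rw [hT]; ring
    _ ≤ 12 * T * 0.7396 := by nlinarith
    _ ≤ 12 * T * ‖1 + v‖ ^ 2 := by gcongr
    _ = 12 * r ^ 3 * (k ^ 2 * (k ^ 2 + 1)) * ‖1 + v‖ ^ 2 := by rw [hT]; ring

theorem useq_bound (a : ℂ) (r : ℝ) (hr : ‖a‖ = r) (K : ℕ)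
    (hK : ((K : ℝ) ^ 2 + 1) * r ≤ 1 / 2) (k : ℕ) (hk : k ≤ K) :
    ‖useq a (k + 1) - (((k : ℝ) + 1 : ℝ) : ℂ) ^ 2 * a‖ ≤ 2 / 5 * r ^ 3 * ((k : ℝ) + 1) ^ 6 ∧
    ‖useq a (k + 1) - useq a k - (2 * (k : ℂ) + 1) * a‖
      ≤ 2 / 5 * r ^ 3 * (((k : ℝ) + 1) ^ 6 - (k : ℝ) ^ 6) := by
  have hr0 : 0 ≤ r := hr ▸ norm_nonneg a
  induction k with
  | zero =>
    simp [useq]; positivity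
  | succ k ih =>
    obtain ⟨ih1, ih2⟩ := ih (by omega)
    have hk1 : (1 : ℝ) ≤ (k : ℝ) + 1 := by
      have : (0 : ℝ) ≤ k := by positivity
      linarith
    have hkK : (k : ℝ) + 1 ≤ K := by exact_mod_cast hk
    have hKk : (((k : ℝ) + 1) ^ 2 + 1) * r ≤ 1 / 2 := by
      refine le_trans ?_ hK
      gcongr
    have hs := size_of a _ r _ hr (by linarith) hKk ih1
    obtain ⟨hne, hE⟩ := err_bound a _ r _ hr hk1 hKk hs
    set b := useq a (k + 1) with hb
    set c := useq a k with hc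
    have hu : useq a (k + 1 + 1) = 2 * (a + b) * (1 - a * b) / (1 + a * b) ^ 2 - c := rfl
    rw [hu]
    set F := 2 * (a + b) * (1 - a * b) / (1 + a * b) ^ 2
    have hd : ‖F - c - b - (2 * ((k + 1 : ℕ) : ℂ) + 1) * a‖
        ≤ 2 / 5 * r ^ 3 * ((((k + 1 : ℕ) : ℝ) + 1) ^ 6 - ((k + 1 : ℕ) : ℝ) ^ 6) := by
      have e : F - c - b - (2 * ((k + 1 : ℕ) : ℂ) + 1) * a
          = (F - 2 * (a + b)) + (b - c - (2 * (k : ℂ) + 1) * a) := by push_cast; ring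
      rw [e]
      refine (norm_add_le _ _).trans ?_
      have : 12 * r ^ 3 * (((k : ℝ) + 1) ^ 2 * (((k : ℝ) + 1) ^ 2 + 1)) +
          2 / 5 * r ^ 3 * (((k : ℝ) + 1) ^ 6 - (k : ℝ) ^ 6) + 2 / 5 * r ^ 3 * 2
          = 2 / 5 * r ^ 3 * ((((k + 1 : ℕ) : ℝ) + 1) ^ 6 - ((k + 1 : ℕ) : ℝ) ^ 6) := by
        push_cast; ring
      have hp : 0 ≤ 2 / 5 * r ^ 3 * 2 := by positivity
      linarith
    refine ⟨?_, hd⟩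
    have e : F - c - ((((k + 1 : ℕ) : ℝ) + 1 : ℝ) : ℂ) ^ 2 * a
        = (F - c - b - (2 * ((k + 1 : ℕ) : ℂ) + 1) * a)
          + (b - (((k : ℝ) + 1 : ℝ) : ℂ) ^ 2 * a) := by push_cast; ring
    rw [e]
    refine (norm_add_le _ _).trans ?_
    push_cast at hd ih1 ⊢
    nlinarith

theorem eqn_of (N : ℕ) {x y : ℂ} (h : (congruentCurveC N).Nonsingular x y) :
    y ^ 2 = x ^ 3 - (N : ℂ) ^ 2 * x := by
  have := (WeierstrassCurve.Affine.equation_iff _ _).mp h.1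
  simp [congruentCurveC] at this
  linear_combination this

theorem pts (N : ℕ) (hN : 1 ≤ N) (x y : ℂ) (h : (congruentCurveC N).Nonsingular x y)
    (a : ℂ) (ha : x * a = N) (r : ℝ) (hr : ‖a‖ = r) (K : ℕ)
    (hK : ((K : ℝ) ^ 2 + 1) * r ≤ 1 / 2) (k : ℕ) (hk : k ≤ K) :
    ∃ x' y', ∃ h' : (congruentCurveC N).Nonsingular x' y',
      (k + 1) • (WeierstrassCurve.Affine.Point.some x y h) = WeierstrassCurve.Affine.Point.some x' y' h' ∧
      x' * useq a (k + 1) = N := by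
  have hN0 : (N : ℂ) ≠ 0 := by exact_mod_cast (by omega : N ≠ 0)
  have ha0 : a ≠ 0 := by rintro rfl; apply hN0; rw [← ha]; ring
  have hx0 : x ≠ 0 := by rintro rfl; apply hN0; rw [← ha]; ring
  have hr0 : 0 < r := hr ▸ norm_pos_iff.mpr ha0
  have e1 := eqn_of N h
  induction k using Nat.strong_induction_on with
  | _ k ih =>
  match k, hk, ih with
  | 0, _, _ => exact ⟨x, y, h, by simp, by simpa [useq] using ha⟩
  | k + 1, hk, ih =>
    have hk0 : (0 : ℝ) ≤ k := by positivity
    have hk1 : (1 : ℝ) ≤ (k : ℝ) + 1 := by linarith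
    have hkK : (k : ℝ) + 1 ≤ K := by exact_mod_cast hk
    have hKk : (((k : ℝ) + 1) ^ 2 + 1) * r ≤ 1 / 2 := by
      refine le_trans ?_ hK
      gcongr
    obtain ⟨ih1, -⟩ := useq_bound a r hr K hK k (by omega)
    have hs := size_of a _ r _ hr (by linarith) hKk ih1
    obtain ⟨hne, -⟩ := err_bound a _ r _ hr hk1 hKk hs
    obtain ⟨x2, y2, h2, hP, hu2⟩ := ih k (by omega) (by omega)
    have e2 := eqn_of N h2
    rcases Nat.eq_zero_or_pos k with rfl | hkpos
    · -- doubling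
      have hr4 : r ≤ 1 / 4 := by norm_num at hKk; linarith
      have hy : y ≠ 0 := by
        rintro rfl
        have h0 : x * (x ^ 2 - (N : ℂ) ^ 2) = 0 := by linear_combination -e1
        rcases mul_eq_zero.mp h0 with h0 | h0
        · exact hx0 h0
        have h4 : a ^ 2 = 1 := by
          have : x ^ 2 * (a ^ 2 - 1) = 0 := by
            have : (x * a) ^ 2 = (N : ℂ) ^ 2 := by rw [ha]
            linear_combination this - h0
          rcases mul_eq_zero.mp this with h5 | h5
          · exact absurd h5 (pow_ne_zero 2 hx0)
          · linear_combination h5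
        have h6 : ‖a‖ ^ 2 = 1 := by rw [← norm_pow, h4, norm_one]
        rw [hr] at h6
        nlinarith
      have hyn : y ≠ (congruentCurveC N).negY x y := by
        simp only [WeierstrassCurve.Affine.negY, congruentCurveC]
        intro h0
        apply hy
        linear_combination h0 / 2
      have hadd := WeierstrassCurve.Affine.Point.add_self_of_Y_ne (h₁ := h) hyn
      refine ⟨_, _, _, Eq.trans ?_ hadd, ?_⟩
      · rw [show (0 + 1 + 1 : ℕ) = 2 from rfl, two_nsmul]
      · rw [WeierstrassCurve.Affine.slope_of_Y_ne rfl hyn]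
        have := dup_alg N x y a hN0 hy e1 ha (by simpa [useq] using hne)
        simp only [WeierstrassCurve.Affine.addX, WeierstrassCurve.Affine.negY, congruentCurveC, useq]
        convert this using 1
        ring_nf
    · obtain ⟨j, rfl⟩ : ∃ j, k = j + 1 := ⟨k - 1, by omega⟩
      obtain ⟨xm, ym, hm, hPm, hum⟩ := ih j (by omega) (by omega)
      have hxne : x2 ≠ x := by
        rintro rfl
        have hau : useq a (j + 1 + 1) = a :=
          mul_left_cancel₀ hx0 (hu2.trans ha.symm)
        rw [hau] at ih1
        set t : ℝ := ((j + 1 : ℕ) : ℝ) + 1 with ht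
        have ht2 : 2 ≤ t := by
          have : (0 : ℝ) ≤ j := by positivity
          rw [ht]; push_cast; linarith
        have e : a - (t : ℂ) ^ 2 * a = -(((t ^ 2 - 1 : ℝ) : ℂ) * a) := by push_cast; ring
        rw [e, norm_neg, norm_mul, Complex.norm_real, hr, Real.norm_of_nonneg (by nlinarith)] at ih1
        have hkr : 0 < t ^ 2 * r := by positivity
        have h3 : t ^ 2 * r ≤ 1 / 2 := by nlinarith
        have h4 : (t ^ 2 * r) ^ 2 ≤ 1 / 4 := by nlinarith
        have h5 : 2 / 5 * r ^ 3 * t ^ 6 ≤ 1 / 10 * (t ^ 2 * r) := by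
          have : 2 / 5 * r ^ 3 * t ^ 6 = 2 / 5 * (t ^ 2 * r) * (t ^ 2 * r) ^ 2 := by ring
          rw [this]
          nlinarith
        have h6 : 0 ≤ (t ^ 2 - 4) * r := mul_nonneg (by nlinarith) hr0.le
        nlinarith
      have hsub : WeierstrassCurve.Affine.Point.some xm ym hm
          = WeierstrassCurve.Affine.Point.some x2 y2 h2 + -(WeierstrassCurve.Affine.Point.some x y h) := by
        rw [← hPm, ← hP, add_smul (j + 1) 1, one_smul]; abel
      rw [WeierstrassCurve.Affine.Point.neg_some, WeierstrassCurve.Affine.Point.add_of_X_ne hxne] at hsub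
      have hxm := (WeierstrassCurve.Affine.Point.some.inj hsub).1
      have hadd := WeierstrassCurve.Affine.Point.add_of_X_ne (h₁ := h2) (h₂ := h) hxne
      refine ⟨_, _, _, Eq.trans ?_ hadd, ?_⟩
      · rw [add_smul (j + 1 + 1) 1, one_smul, hP]
      · rw [WeierstrassCurve.Affine.slope_of_X_ne hxne] at hxm ⊢
        refine step_alg N x y x2 y2 xm _ a _ _ hN0 e1 e2 hxne ?_ ?_ ha hu2 hum hne
        · rw [hxm]; simp [WeierstrassCurve.Affine.addX, WeierstrassCurve.Affine.negY, congruentCurveC]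
        · simp [WeierstrassCurve.Affine.addX, congruentCurveC]

theorem stmt3 (N : ℕ) (hN : 1 ≤ N) (n : ℤ) (hn : 1 ≤ n)
    (x y : ℂ) (h : (congruentCurveC N).Nonsingular x y)
    (horder : n • (WeierstrassCurve.Affine.Point.some x y h) = 0) :
    ‖x‖ ≤ (1 / 2 : ℝ) * (n : ℝ) ^ 2 * (N : ℝ) := by
  by_contra hcon
  push Not at hcon
  obtain ⟨p, rfl⟩ : ∃ p : ℕ, n = p := ⟨n.toNat, by omega⟩
  rw [natCast_zsmul] at horder
  have hp : 1 ≤ p := by exact_mod_cast hn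
  have hpR : (1 : ℝ) ≤ p := by exact_mod_cast hp
  have hNR : (1 : ℝ) ≤ N := by exact_mod_cast hN
  have hN0 : (N : ℂ) ≠ 0 := by exact_mod_cast (by omega : N ≠ 0)
  simp only [Int.cast_natCast] at hcon
  have hxpos : 0 < ‖x‖ := lt_trans (by positivity) hcon
  have hx0 : x ≠ 0 := norm_pos_iff.mp hxpos
  obtain ⟨a, hadef⟩ : ∃ a : ℂ, a = N / x := ⟨_, rfl⟩
  have ha : x * a = N := by rw [hadef]; field_simp
  obtain ⟨r, hr⟩ : ∃ r : ℝ, ‖a‖ = r := ⟨_, rfl⟩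
  have hrx : ‖x‖ * r = N := by rw [← hr, ← norm_mul, ha]; simp
  have hr0 : 0 < r := by
    rw [← hr, norm_pos_iff, hadef]; exact div_ne_zero hN0 hx0
  have hrp : (p : ℝ) ^ 2 * r < 2 := by
    have h1 : (1 / 2 : ℝ) * (p : ℝ) ^ 2 * N * r < N := by
      have := mul_lt_mul_of_pos_right hcon hr0
      rwa [hrx] at this
    have h2 : N * ((p : ℝ) ^ 2 * r) < N * 2 := by nlinarith
    exact lt_of_mul_lt_mul_left h2 (by linarith)
  rcases Nat.even_or_odd' p with ⟨m, rfl | rfl⟩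
  · obtain ⟨k, rfl⟩ : ∃ k, m = k + 1 := ⟨m - 1, by omega⟩
    have hk0 : (0 : ℝ) ≤ k := by positivity
    push_cast at hrp
    have hm : ((k : ℝ) + 1) ^ 2 * r < 1 / 2 := by nlinarith
    have hK : ((k : ℝ) ^ 2 + 1) * r ≤ 1 / 2 := by
      refine le_trans ?_ hm.le
      gcongr
      nlinarith
    obtain ⟨x', y', h', hP, hu⟩ := pts N hN x y h a ha r hr k hK k le_rfl
    have hz : WeierstrassCurve.Affine.Point.some x' y' h' = -WeierstrassCurve.Affine.Point.some x' y' h' := by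
      rw [eq_neg_iff_add_eq_zero, ← hP, ← two_nsmul, ← mul_smul]; exact horder
    rw [WeierstrassCurve.Affine.Point.neg_some] at hz
    have hy := (WeierstrassCurve.Affine.Point.some.inj hz).2
    simp only [WeierstrassCurve.Affine.negY, congruentCurveC] at hy
    have hy0 : y' = 0 := by linear_combination hy / 2
    have e := eqn_of N h'
    have hx'0 : x' ≠ 0 := by rintro rfl; apply hN0; rw [← hu]; ring
    have h1 : x' ^ 2 = (N : ℂ) ^ 2 := by
      apply mul_left_cancel₀ hx'0
      rw [hy0] at e
      linear_combination -e
    have h2 : useq a (k + 1) ^ 2 = 1 := by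
      apply mul_left_cancel₀ (pow_ne_zero 2 hx'0)
      rw [← mul_pow, hu, h1, mul_one]
    have h3 : ‖useq a (k + 1)‖ ^ 2 = 1 := by rw [← norm_pow, h2, norm_one]
    obtain ⟨ih1, -⟩ := useq_bound a r hr k hK k le_rfl
    have hh : ‖(((k : ℝ) + 1 : ℝ) : ℂ) ^ 2 * a‖ = ((k : ℝ) + 1) ^ 2 * r := by
      rw [norm_mul, norm_pow, Complex.norm_real, hr, Real.norm_of_nonneg (by linarith)]
    have h4 := norm_add_le (useq a (k + 1) - (((k : ℝ) + 1 : ℝ) : ℂ) ^ 2 * a)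
      ((((k : ℝ) + 1 : ℝ) : ℂ) ^ 2 * a)
    rw [sub_add_cancel, hh] at h4
    have h5 : 2 / 5 * r ^ 3 * ((k : ℝ) + 1) ^ 6 ≤ 2 / 5 * (1 / 2) ^ 3 := by
      have : 2 / 5 * r ^ 3 * ((k : ℝ) + 1) ^ 6 = 2 / 5 * (((k : ℝ) + 1) ^ 2 * r) ^ 3 := by ring
      rw [this]
      gcongr
    have h6 : ‖useq a (k + 1)‖ ≤ 3 / 5 := by linarith
    have h7 := norm_nonneg (useq a (k + 1))
    nlinarith
  · rcases Nat.eq_zero_or_pos m with rfl | hmpos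
    · simp at horder
    obtain ⟨k, rfl⟩ : ∃ k, m = k + 1 := ⟨m - 1, by omega⟩
    have hk0 : (0 : ℝ) ≤ k := by positivity
    push_cast at hrp
    have hK : (((k + 1 : ℕ) : ℝ) ^ 2 + 1) * r ≤ 1 / 2 := by
      push_cast
      nlinarith
    obtain ⟨x', y', h', hP, hu⟩ := pts N hN x y h a ha r hr (k + 1) hK k (by omega)
    obtain ⟨x2, y2, h2, hP2, hu2⟩ := pts N hN x y h a ha r hr (k + 1) hK (k + 1) le_rfl
    have hz : WeierstrassCurve.Affine.Point.some x2 y2 h2 = -WeierstrassCurve.Affine.Point.some x' y' h' := by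
      rw [eq_neg_iff_add_eq_zero, ← hP, ← hP2, ← add_smul, ← horder]; congr 1; ring
    rw [WeierstrassCurve.Affine.Point.neg_some] at hz
    have hx := (WeierstrassCurve.Affine.Point.some.inj hz).1
    have hx'0 : x' ≠ 0 := by rintro rfl; apply hN0; rw [← hu]; ring
    have hueq : useq a (k + 1 + 1) = useq a (k + 1) := by
      apply mul_left_cancel₀ hx'0
      rw [hu, ← hx, hu2]
    obtain ⟨-, ih⟩ := useq_bound a r hr (k + 1) hK (k + 1) le_rfl
    rw [hueq, sub_self, zero_sub, norm_neg, norm_mul, hr] at ih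
    set t : ℝ := (k : ℝ) + 1 with ht
    have ht1 : 1 ≤ t := by linarith
    have hn2 : ‖(2 * ((k + 1 : ℕ) : ℂ) + 1)‖ = 2 * t + 1 := by
      have : (2 * ((k + 1 : ℕ) : ℂ) + 1) = ((2 * t + 1 : ℝ) : ℂ) := by rw [ht]; push_cast; ring
      rw [this, Complex.norm_real, Real.norm_of_nonneg (by linarith)]
    rw [hn2] at ih
    push_cast at ih
    rw [← ht] at ih
    have hA : (t + 1) ^ 2 * r ≤ 8 / 9 := by nlinarith
    have hB : t ^ 2 * r ≤ 1 / 2 := by nlinarith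
    have hA0 : 0 ≤ (t + 1) ^ 2 * r := by positivity
    have hB0 : 0 ≤ t ^ 2 * r := by positivity
    have e : 2 / 5 * r ^ 3 * ((t + 1) ^ 6 - t ^ 6)
        = ((2 * t + 1) * r) * (2 / 5 * (((t + 1) ^ 2 * r) ^ 2 + ((t + 1) ^ 2 * r) * (t ^ 2 * r)
          + (t ^ 2 * r) ^ 2)) := by ring
    rw [e] at ih
    have hpos : 0 < (2 * t + 1) * r := by positivity
    have hlt : 2 / 5 * (((t + 1) ^ 2 * r) ^ 2 + ((t + 1) ^ 2 * r) * (t ^ 2 * r)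
          + (t ^ 2 * r) ^ 2) < 1 := by
      have hA2 : ((t + 1) ^ 2 * r) ^ 2 ≤ (8 / 9) ^ 2 := pow_le_pow_left₀ hA0 hA 2
      have hB2 : (t ^ 2 * r) ^ 2 ≤ (1 / 2) ^ 2 := pow_le_pow_left₀ hB0 hB 2
      have hAB : ((t + 1) ^ 2 * r) * (t ^ 2 * r) ≤ 8 / 9 * (1 / 2) :=
        mul_le_mul hA hB hB0 (by norm_num)
      linarith
    have hfin := mul_lt_mul_of_pos_left hlt hpos
    rw [mul_one] at hfin
    linarith
end

section
/- Let N be an odd positive integer and let P = (a, b) be a non-torsion point of E_N(ℚ) with a, b ∈ ℤ and a odd. Then for every odd integer n ≥ 1, ord₂(ψ_n(P)) = (n² − 1)/4, and for every even integer n ≥ 2, ord₂(ψ_n(P)) ≥ n²/4 + ord₂(b). -/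
/-- The congruent number curve `E_N : y² = x³ - N²x` over `ℤ`. -/
def congruentCurveZ (N : ℕ) : WeierstrassCurve ℤ :=
  { a₁ := 0, a₂ := 0, a₃ := 0, a₄ := -(N : ℤ) ^ 2, a₆ := 0 }

/-- The value `ψₙ(P)` of the `n`-th division polynomial of `E_N` at the integral point
`P = (a, b)`. -/
noncomputable def psiEN (N : ℕ) (a b : ℤ) (n : ℤ) : ℤ :=
  ((congruentCurveZ N).Ψ n).evalEval a b

set_option linter.all false

/-- x-coordinate, junk 0 at infinity -/
def ptX {W : WeierstrassCurve.Affine ℚ} : W.Point → ℚ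
  | .zero => 0
  | .some x _ _ => x

lemma ptX_ne {W : WeierstrassCurve.Affine ℚ} (Q R : W.Point) (hQ : Q ≠ 0) (hR : R ≠ 0)
    (hs : Q + R ≠ 0) (hd : Q - R ≠ 0) : ptX Q ≠ ptX R := by
  rcases Q with _ | ⟨x1, y1, h1⟩
  · exact absurd rfl hQ
  rcases R with _ | ⟨x2, y2, h2⟩
  · exact absurd rfl hR
  intro h
  have h' : x1 = x2 := h
  rcases (WeierstrassCurve.Affine.Point.X_eq_iff (h₁ := h1) (h₂ := h2)).1 h' with h | h
  · exact hd (sub_eq_zero.2 h)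
  · exact hs (by rw [h]; simp)

lemma ptX_add_sub (N : ℕ) (Q R : (congruentCurve N).Point) (hQ : Q ≠ 0) (hR : R ≠ 0)
    (hx : ptX Q ≠ ptX R) :
    (ptX (Q + R) + ptX (Q - R)) * (ptX Q - ptX R) ^ 2 =
      2 * (ptX Q * ptX R + -(N : ℚ) ^ 2) * (ptX Q + ptX R) ∧
    (ptX (Q + R) * ptX (Q - R)) * (ptX Q - ptX R) ^ 2 =
      (ptX Q * ptX R - -(N : ℚ) ^ 2) ^ 2 := by
  rcases Q with _ | ⟨x1, y1, h1⟩
  · exact absurd rfl hQ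
  rcases R with _ | ⟨x2, y2, h2⟩
  · exact absurd rfl hR
  have hx' : x1 ≠ x2 := hx
  have e1 := (WeierstrassCurve.Affine.equation_iff _ _).1 h1.1
  have e2 := (WeierstrassCurve.Affine.equation_iff _ _).1 h2.1
  rw [sub_eq_add_neg, WeierstrassCurve.Affine.Point.neg_some,
    WeierstrassCurve.Affine.Point.add_of_X_ne hx', WeierstrassCurve.Affine.Point.add_of_X_ne hx']
  simp only [ptX, WeierstrassCurve.Affine.slope_of_X_ne hx', WeierstrassCurve.Affine.addX,
    WeierstrassCurve.Affine.negY]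
  simp only [congruentCurve] at e1 e2 ⊢
  have hd : x1 - x2 ≠ 0 := sub_ne_zero.2 hx'
  have e1' : y1 ^ 2 = x1 ^ 3 - N ^ 2 * x1 := by linear_combination e1
  have e2' : y2 ^ 2 = x2 ^ 3 - N ^ 2 * x2 := by linear_combination e2
  constructor
  · field_simp
    ring_nf
    simp only [e1', e2']
    ring
  · field_simp
    have k1 : y1 ^ 4 = (x1 ^ 3 - N ^ 2 * x1) ^ 2 := by rw [← e1']; ring
    have k2 : y2 ^ 4 = (x2 ^ 3 - N ^ 2 * x2) ^ 2 := by rw [← e2']; ring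
    ring_nf
    simp only [e1', e2', k1, k2]
    ring

lemma ptX_double (N : ℕ) (x y : ℚ) (h : (congruentCurve N).Nonsingular x y) (hy : y ≠ 0) :
    ptX (WeierstrassCurve.Affine.Point.some _ _ h + WeierstrassCurve.Affine.Point.some _ _ h)
      * (4 * y ^ 2) = (x ^ 2 - -(N : ℚ) ^ 2) ^ 2 := by
  have e1 := (WeierstrassCurve.Affine.equation_iff _ _).1 h.1
  have hy' : y ≠ (congruentCurve N).negY x y := by
    simp only [WeierstrassCurve.Affine.negY, congruentCurve]
    intro h
    apply hy
    linarith
  rw [WeierstrassCurve.Affine.Point.add_self_of_Y_ne hy']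
  simp only [ptX, WeierstrassCurve.Affine.slope_of_Y_ne rfl hy', WeierstrassCurve.Affine.addX,
    WeierstrassCurve.Affine.negY]
  simp only [congruentCurve] at e1 ⊢
  have e1' : y ^ 2 = x ^ 3 - N ^ 2 * x := by linear_combination e1
  have : y - (-y - 0 * x - 0) = 2 * y := by ring
  rw [this]
  field_simp
  ring_nf
  simp only [e1']
  ring

lemma y_ne (N : ℕ) (x y : ℚ) (h : (congruentCurve N).Nonsingular x y)
    (h2 : WeierstrassCurve.Affine.Point.some _ _ h + WeierstrassCurve.Affine.Point.some _ _ h ≠ 0) :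
    y ≠ 0 := by
  rintro rfl
  apply h2
  apply WeierstrassCurve.Affine.Point.add_self_of_Y_eq
  simp [WeierstrassCurve.Affine.negY, congruentCurve]

/-- the elliptic sequence attached to the x-coordinates -/
noncomputable def wSeq (x : ℕ → ℚ) (y : ℚ) : ℕ → ℚ
  | 0 => 0
  | 1 => 1
  | 2 => 2 * y
  | (k + 3) => (x 1 - x (k + 2)) * wSeq x y (k + 2) ^ 2 / wSeq x y (k + 1)

section
variable (x : ℕ → ℚ) (y A : ℚ) (hy : y ≠ 0) (hy2 : y ^ 2 = x 1 ^ 3 + A * x 1)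
  (hd : x 2 * (4 * y ^ 2) = (x 1 ^ 2 - A) ^ 2)
  (hne : ∀ n k, 1 ≤ n → 1 ≤ k → x (n + k) ≠ x n)
  (hs : ∀ n k, 1 ≤ n → 1 ≤ k → (x (2 * n + k) + x k) * (x (n + k) - x n) ^ 2 =
    2 * (x (n + k) * x n + A) * (x (n + k) + x n))
  (hp : ∀ n k, 1 ≤ n → 1 ≤ k → (x (2 * n + k) * x k) * (x (n + k) - x n) ^ 2 =
    (x (n + k) * x n - A) ^ 2)

include hy hne in
lemma wSeq_ne (n : ℕ) : wSeq x y (n + 1) ≠ 0 := by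
  induction n using Nat.strong_induction_on with
  | _ n ih =>
    match n with
    | 0 => simp [wSeq]
    | 1 => simpa [wSeq] using hy
    | k + 2 =>
      rw [wSeq]
      have h1 := ih k (by omega)
      have h2 := ih (k + 1) (by omega)
      have h3 := hne 1 (k + 1) le_rfl (by omega)
      rw [show 1 + (k + 1) = k + 2 by ring] at h3
      exact div_ne_zero (mul_ne_zero (sub_ne_zero.2 h3.symm) (pow_ne_zero _ h2)) h1

include hy hne in
lemma wSeq_one (k : ℕ) : wSeq x y (k + 3) * wSeq x y (k + 1) =
    (x 1 - x (k + 2)) * wSeq x y (k + 2) ^ 2 := by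
  rw [wSeq]
  field_simp [wSeq_ne x y hy hne k]

include hy hy2 hd hne hs hp in
lemma wSeq_two (k : ℕ) : wSeq x y (k + 5) * wSeq x y (k + 1) =
    (x 2 - x (k + 3)) * wSeq x y (k + 3) ^ 2 * wSeq x y 2 ^ 2 := by
  have h1 := wSeq_one x y hy hne (k + 2)
  have h2 := wSeq_one x y hy hne k
  have h3 := wSeq_one x y hy hne (k + 1)
  have n3 := wSeq_ne x y hy hne (k + 2)
  have s := hs 1 (k + 2) le_rfl (by omega)
  have p := hp 1 (k + 2) le_rfl (by omega)
  have w2 : wSeq x y 2 = 2 * y := rfl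
  simp only [show 2 * 1 + (k + 2) = k + 4 by ring, show 1 + (k + 2) = k + 3 by ring,
    show k + 2 + 1 = k + 3 by ring, show k + 2 + 2 = k + 4 by ring, show k + 2 + 3 = k + 5 by ring,
    show k + 1 + 1 = k + 2 by ring, show k + 1 + 2 = k + 3 by ring, show k + 1 + 3 = k + 4 by ring]
    at *
  have key : (x 1 - x (k + 4)) * (x 1 - x (k + 2)) * (x 1 - x (k + 3)) ^ 2 =
      4 * y ^ 2 * (x 2 - x (k + 3)) := by
    linear_combination p - x 1 * s - hd + 4 * x (k + 3) * hy2
  apply mul_right_cancel₀ (pow_ne_zero 2 n3)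
  rw [w2]
  calc wSeq x y (k + 5) * wSeq x y (k + 1) * wSeq x y (k + 3) ^ 2
      = (wSeq x y (k + 5) * wSeq x y (k + 3)) * (wSeq x y (k + 3) * wSeq x y (k + 1)) := by ring
    _ = (x 1 - x (k + 4)) * (x 1 - x (k + 2)) * (wSeq x y (k + 4) * wSeq x y (k + 2)) ^ 2 := by
        rw [h1, h2]; ring
    _ = ((x 1 - x (k + 4)) * (x 1 - x (k + 2)) * (x 1 - x (k + 3)) ^ 2)
          * wSeq x y (k + 3) ^ 4 := by rw [h3]; ring
    _ = _ := by rw [key]; ring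

include hy hy2 hd hne hs hp in
lemma wSeq_gen (n : ℕ) : ∀ k : ℕ, wSeq x y (2 * n + k + 3) * wSeq x y (k + 1) =
    (x (n + 1) - x (n + k + 2)) * wSeq x y (n + k + 2) ^ 2 * wSeq x y (n + 1) ^ 2 := by
  induction n using Nat.strong_induction_on with
  | _ n ih =>
    intro k
    match n with
    | 0 => 
      have := wSeq_one x y hy hne k
      have w1 : wSeq x y 1 = 1 := rfl
      simp only [mul_zero, zero_add, w1]
      linear_combination this
    | 1 =>
      have := wSeq_two x y A hy hy2 hd hne hs hp k
      rw [show 2 * 1 + k + 3 = k + 5 by ring, show 1 + k + 2 = k + 3 by ring]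
      exact this
    | j + 2 =>
      -- target index n' = j + 3, m = j + k + 4; uses n' - 1 = j + 2 and n' - 2 = j + 1
      have i1 := ih (j + 1) (by omega) (k + 1)
      have i0 := ih j (by omega) (k + 2)
      have a1 := wSeq_one x y hy hne (2 * j + k + 4)
      have a2 := wSeq_one x y hy hne k
      have a3 := wSeq_one x y hy hne j
      have s1 := hs 1 (j + 1) le_rfl (by omega)
      have p1 := hp 1 (j + 1) le_rfl (by omega)
      have s2 := hs (j + 2) (k + 2) (by omega) (by omega)
      have p2 := hp (j + 2) (k + 2) (by omega) (by omega)
      have n1 := wSeq_ne x y hy hne (j + k + 3)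
      have n2 := wSeq_ne x y hy hne (j + 1)
      have n3 := wSeq_ne x y hy hne j
      have n4 := wSeq_ne x y hy hne (2 * j + k + 4)
      have n5 := wSeq_ne x y hy hne (k + 2)
      have d1 := hne 1 (j + 1) le_rfl (by omega)
      have d2 := hne (j + 1) (k + 3) (by omega) (by omega)
      simp only [show 2 * (j + 1) + (k + 1) + 3 = 2 * j + k + 6 by ring,
        show k + 1 + 1 = k + 2 by ring, show j + 1 + 1 = j + 2 by ring,
        show j + 1 + (k + 1) + 2 = j + k + 4 by ring,
        show 2 * j + (k + 2) + 3 = 2 * j + k + 5 by ring,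
        show k + 2 + 1 = k + 3 by ring, show j + (k + 2) + 2 = j + k + 4 by ring,
        show 2 * j + k + 4 + 3 = 2 * j + k + 7 by ring,
        show 2 * j + k + 4 + 1 = 2 * j + k + 5 by ring,
        show 2 * j + k + 4 + 2 = 2 * j + k + 6 by ring,
        show 2 * 1 + (j + 1) = j + 3 by ring,
        show 1 + (j + 1) = j + 2 by ring,
        show 2 * (j + 2) + (k + 2) = 2 * j + k + 6 by ring,
        show j + 2 + (k + 2) = j + k + 4 by ring,
        show j + k + 3 + 1 = j + k + 4 by ring,
        show j + 1 + (k + 3) = j + k + 4 by ring,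
        show 2 * (j + 2) + k + 3 = 2 * j + k + 7 by ring,
        show j + 2 + 1 = j + 3 by ring,
        show j + 2 + k + 2 = j + k + 4 by ring] at *
      generalize wSeq x y (2 * j + k + 7) = W7 at *
      generalize wSeq x y (2 * j + k + 6) = W6 at *
      generalize wSeq x y (2 * j + k + 5) = W5 at *
      generalize wSeq x y (j + k + 4) = Wm at *
      generalize wSeq x y (j + 1) = V1 at *
      generalize wSeq x y (j + 2) = V2 at *
      generalize wSeq x y (j + 3) = V3 at *
      generalize wSeq x y (k + 1) = U1 at *
      generalize wSeq x y (k + 2) = U2 at *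
      generalize wSeq x y (k + 3) = U3 at *
      generalize x (2 * j + k + 6) = X6 at *
      generalize x (j + k + 4) = Xm at *
      generalize x (j + 1) = z1 at *
      generalize x (j + 2) = z2 at *
      generalize x (j + 3) = z3 at *
      generalize x (k + 2) = t2 at *
      generalize x 1 = c at *
      have key : (Xm - z3) * (Xm - z1) * (z2 - c) ^ 2 = (X6 - c) * (t2 - c) * (Xm - z2) ^ 2 := by
        linear_combination p1 - Xm * s1 - p2 + c * s2
      have hX : z1 - Xm ≠ 0 := sub_ne_zero.2 d2.symm
      have hc : c - z2 ≠ 0 := sub_ne_zero.2 d1.symm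
      -- multiply by W5 * U3
      have hW : W5 * U3 ≠ 0 := mul_ne_zero n4 n5
      have hz : (z1 - Xm) * Wm ^ 2 * V1 ^ 2 ≠ 0 := by rw [← i0]; exact hW
      apply mul_right_cancel₀ hz
      calc W7 * U1 * ((z1 - Xm) * Wm ^ 2 * V1 ^ 2) = (W7 * W5) * (U3 * U1) := by rw [← i0]; ring
        _ = (c - X6) * (c - t2) * (W6 * U2) ^ 2 := by rw [a1, a2]; ring
        _ = ((X6 - c) * (t2 - c) * (Xm - z2) ^ 2) * Wm ^ 4 * V2 ^ 4 := by rw [i1]; ring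
        _ = (z3 - Xm) * (z1 - Xm) * Wm ^ 4 * ((c - z2) * V2 ^ 2) ^ 2 := by rw [← key]; ring
        _ = _ := by rw [← a3]; ring

include hy hy2 hd hne hs hp in
lemma wSeq_three : wSeq x y 3 = 3 * x 1 ^ 4 + 6 * A * x 1 ^ 2 - A ^ 2 := by
  have := wSeq_one x y hy hne 0
  have w1 : wSeq x y 1 = 1 := rfl
  have w2 : wSeq x y 2 = 2 * y := rfl
  simp only [zero_add, w1, w2] at this
  linear_combination this - hd + 4 * x 1 * hy2

include hy hy2 hd hne hs hp in
lemma wSeq_four : wSeq x y 4 = 2 * y * (2 * (x 1 ^ 6 + 5 * A * x 1 ^ 4 - 5 * A ^ 2 * x 1 ^ 2 - A ^ 3)) := by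
  have h := wSeq_one x y hy hne 1
  have w3 := wSeq_three x y A hy hy2 hd hne hs hp
  have w2 : wSeq x y 2 = 2 * y := rfl
  have s := hs 1 1 le_rfl le_rfl
  have hn := hne 1 1 le_rfl le_rfl
  norm_num at h s hn
  rw [w2] at h
  have h3 := wSeq_one x y hy hne 0
  have w1 : wSeq x y 1 = 1 := rfl
  simp only [zero_add, w1, w2] at h3
  have hn' : (2 * y) ≠ 0 := by simpa using hy
  apply mul_right_cancel₀ hn'
  rw [h]
  have e3 : (x 1 - x 2) * (4 * y ^ 2) = wSeq x y 3 := by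
    linear_combination -h3
  have key : (x 1 - x 3) * wSeq x y 3 ^ 2 = 2 * x 1 * wSeq x y 3 ^ 2 -
      2 * ((x 2 * (4 * y ^ 2)) * x 1 + A * (4 * y ^ 2)) *
        (x 2 * (4 * y ^ 2) + x 1 * (4 * y ^ 2)) := by
    rw [← e3]
    linear_combination -(4 * y ^ 2) ^ 2 * s
  rw [key, hd, w3]
  have : 2 * y * (2 * (x 1 ^ 6 + 5 * A * x 1 ^ 4 - 5 * A ^ 2 * x 1 ^ 2 - A ^ 3)) * (2 * y) =
    8 * y ^ 2 * ((x 1 ^ 6 + 5 * A * x 1 ^ 4 - 5 * A ^ 2 * x 1 ^ 2 - A ^ 3)) := by ring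
  rw [this, hy2]
  ring


include hy hy2 hd hne hs hp in
lemma wSeq_eq (p : ℕ → ℚ) (p1 : p 1 = 1) (p2 : p 2 = 1)
    (p3 : p 3 = 3 * x 1 ^ 4 + 6 * A * x 1 ^ 2 - A ^ 2)
    (p4 : p 4 = 2 * (x 1 ^ 6 + 5 * A * x 1 ^ 4 - 5 * A ^ 2 * x 1 ^ 2 - A ^ 3))
    (pe : ∀ m, p (2 * (m + 3)) = p (m + 2) ^ 2 * p (m + 3) * p (m + 5) -
      p (m + 1) * p (m + 3) * p (m + 4) ^ 2)
    (po : ∀ m, p (2 * (m + 2) + 1) =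
      p (m + 4) * p (m + 2) ^ 3 * (if Even m then (4 * y ^ 2) ^ 2 else 1) -
      p (m + 1) * p (m + 3) ^ 3 * (if Even m then 1 else (4 * y ^ 2) ^ 2)) (n : ℕ) :
    wSeq x y (n + 1) = p (n + 1) * if Even (n + 1) then 2 * y else 1 := by
  induction n using Nat.strong_induction_on with
  | _ n ih =>
    have hn' : (2 * y) ≠ 0 := by simpa using hy
    obtain h | h | h | h | ⟨m, h⟩ | ⟨m, h⟩ : n = 0 ∨ n = 1 ∨ n = 2 ∨ n = 3 ∨
        (∃ m, n = 2 * (m + 2)) ∨ (∃ m, n = 2 * (m + 2) + 1) := by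
      rcases Nat.even_or_odd' n with ⟨c, hc | hc⟩
      · rcases c with _ | _ | c
        · omega
        · omega
        · exact Or.inr (Or.inr (Or.inr (Or.inr (Or.inl ⟨c, by omega⟩))))
      · rcases c with _ | _ | c
        · omega
        · omega
        · exact Or.inr (Or.inr (Or.inr (Or.inr (Or.inr ⟨c, by omega⟩))))
    · subst h; simp [wSeq, p1]
    · subst h; simp [wSeq, p2]
    · subst h
      have := wSeq_three x y A hy hy2 hd hne hs hp
      rw [if_neg (by decide), mul_one, p3, this]
    · subst h
      have := wSeq_four x y A hy hy2 hd hne hs hp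
      rw [if_pos (by decide), p4, this]; ring
    · subst h
      have g := wSeq_gen x y A hy hy2 hd hne hs hp (m + 1) 0
      have a1 := wSeq_one x y hy hne m
      have a2 := wSeq_one x y hy hne (m + 1)
      have j1 := ih m (by omega)
      have j2 := ih (m + 1) (by omega)
      have j3 := ih (m + 2) (by omega)
      have j4 := ih (m + 3) (by omega)
      have w1 : wSeq x y 1 = 1 := rfl
      have q := po m
      simp only [show 2 * (m + 1) + 0 + 3 = 2 * (m + 2) + 1 by ring, zero_add, w1, mul_one,
        show m + 1 + 1 = m + 2 by ring, show m + 2 + 1 = m + 3 by ring,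
        show m + 3 + 1 = m + 4 by ring,
        show m + 1 + 0 + 2 = m + 3 by ring, show m + 1 + 2 = m + 3 by ring,
        show m + 1 + 3 = m + 4 by ring] at *
      have r : wSeq x y (2 * (m + 2) + 1) = wSeq x y (m + 4) * wSeq x y (m + 2) ^ 3 -
          wSeq x y (m + 1) * wSeq x y (m + 3) ^ 3 := by
        linear_combination g + wSeq x y (m + 3) ^ 2 * a1 - wSeq x y (m + 2) ^ 2 * a2
      rw [r, q, j1, j2, j3, j4]
      rcases Nat.even_or_odd m with hm | hm
      · have := Nat.not_odd_iff_even.2 hm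
        simp [Nat.even_add, Nat.even_add_one, hm, show Even 4 by decide, show ¬ Even 3 by decide]
        ring
      · have := Nat.not_even_iff_odd.2 hm
        simp [Nat.even_add, Nat.even_add_one, this, show Even 4 by decide, show ¬ Even 3 by decide]
        ring
    · subst h
      have g := wSeq_gen x y A hy hy2 hd hne hs hp (m + 1) 1
      have a1 := wSeq_one x y hy hne m
      have a2 := wSeq_one x y hy hne (m + 2)
      have j1 := ih m (by omega)
      have j2 := ih (m + 1) (by omega)
      have j3 := ih (m + 2) (by omega)
      have j4 := ih (m + 3) (by omega)
      have j5 := ih (m + 4) (by omega)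
      have w2 : wSeq x y 2 = 2 * y := rfl
      have q := pe m
      simp only [show 2 * (m + 1) + 1 + 3 = 2 * (m + 3) by ring, w2, 
        show 2 * (m + 2) + 1 + 1 = 2 * (m + 3) by ring,
        show 1 + 1 = 2 by ring,
        show m + 1 + 1 = m + 2 by ring, show m + 2 + 1 = m + 3 by ring,
        show m + 3 + 1 = m + 4 by ring, show m + 4 + 1 = m + 5 by ring,
        show m + 1 + 1 + 2 = m + 4 by ring, show m + 2 + 2 = m + 4 by ring,
        show m + 2 + 3 = m + 5 by ring] at *
      have r : wSeq x y (2 * (m + 3)) * (2 * y) = wSeq x y (m + 2) ^ 2 * wSeq x y (m + 3) *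
          wSeq x y (m + 5) - wSeq x y (m + 1) * wSeq x y (m + 3) * wSeq x y (m + 4) ^ 2 := by
        linear_combination g + wSeq x y (m + 4) ^ 2 * a1 - wSeq x y (m + 2) ^ 2 * a2
      apply mul_right_cancel₀ hn'
      rw [r, q, j1, j2, j3, j4, j5]
      rcases Nat.even_or_odd m with hm | hm
      · have := Nat.not_odd_iff_even.2 hm
        simp [Nat.even_add, Nat.even_add_one, hm, show Even 4 by decide, show ¬ Even 3 by decide,
          show ¬ Even 5 by decide]
        ring
      · have := Nat.not_even_iff_odd.2 hm
        simp [Nat.even_add, Nat.even_add_one, this, show Even 4 by decide, show ¬ Even 3 by decide,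
          show ¬ Even 5 by decide]
        ring
end

lemma val_aux_s5 (p : ℕ → ℤ) (b : ℤ) (p1 : p 1 = 1) (p2 : p 2 = 1)
    (p3 : ∃ v, Odd v ∧ p 3 = 4 * v) (p4 : ∃ u, p 4 = 8 * u)
    (pe : ∀ m, p (2 * (m + 3)) = p (m + 2) ^ 2 * p (m + 3) * p (m + 5) -
      p (m + 1) * p (m + 3) * p (m + 4) ^ 2)
    (po : ∀ m, p (2 * (m + 2) + 1) =
      p (m + 4) * p (m + 2) ^ 3 * (if Even m then (4 * (4 * b) ^ 2) ^ 2 else 1) -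
      p (m + 1) * p (m + 3) ^ 3 * (if Even m then 1 else (4 * (4 * b) ^ 2) ^ 2)) (k : ℕ) :
    (∃ v, Odd v ∧ p (2 * k + 1) = 2 ^ (k ^ 2 + k) * v) ∧
    (∃ u, 2 * p (2 * (k + 1)) = 2 ^ ((k + 1) ^ 2) * u) := by
  induction k using Nat.strong_induction_on with
  | _ k ih =>
    constructor
    · rcases k with _ | _ | k
      · exact ⟨1, odd_one, by simpa using p1⟩
      · obtain ⟨v, hv, h⟩ := p3
        exact ⟨v, hv, by simpa using h⟩
      · rw [show 2 * (k + 1 + 1) + 1 = 2 * (k + 2) + 1 by ring, po k]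
        rcases Nat.even_or_odd' k with ⟨j, rfl | rfl⟩
        · have h : Even (2 * j) := by simp
          simp only [h, if_true]
          obtain ⟨v1, hv1, e1⟩ := (ih j (by omega)).1
          obtain ⟨v3, hv3, e3⟩ := (ih (j + 1) (by omega)).1
          obtain ⟨u2, e2⟩ := (ih j (by omega)).2
          obtain ⟨u4, e4⟩ := (ih (j + 1) (by omega)).2
          rw [show 2 * (j + 1) + 1 = 2 * j + 3 by ring] at e3
          rw [show 2 * (j + 1) = 2 * j + 2 by ring] at e2
          rw [show 2 * (j + 1 + 1) = 2 * j + 4 by ring] at e4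
          refine ⟨u4 * u2 ^ 3 * 512 * b ^ 4 - v1 * v3 ^ 3, ?_, ?_⟩
          · apply Even.sub_odd
            · exact ⟨u4 * u2 ^ 3 * 256 * b ^ 4, by ring⟩
            · exact hv1.mul hv3.pow
          · have : p (2 * j + 4) * p (2 * j + 2) ^ 3 * (4 * (4 * b) ^ 2) ^ 2 =
              (2 * p (2 * j + 4)) * (2 * p (2 * j + 2)) ^ 3 * (256 * b ^ 4) := by ring
            rw [this, e1, e3, e2, e4]
            ring
        · have h : ¬ Even (2 * j + 1) := by simp
          simp only [h, if_false]
          obtain ⟨v3, hv3, e3⟩ := (ih (j + 1) (by omega)).1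
          obtain ⟨v5, hv5, e5⟩ := (ih (j + 2) (by omega)).1
          obtain ⟨u2, e2⟩ := (ih j (by omega)).2
          obtain ⟨u4, e4⟩ := (ih (j + 1) (by omega)).2
          rw [show 2 * (j + 1) + 1 = 2 * j + 1 + 2 by ring] at e3
          rw [show 2 * (j + 2) + 1 = 2 * j + 1 + 4 by ring] at e5
          rw [show 2 * (j + 1) = 2 * j + 1 + 1 by ring] at e2
          rw [show 2 * (j + 1 + 1) = 2 * j + 1 + 3 by ring] at e4
          refine ⟨v5 * v3 ^ 3 - u2 * u4 ^ 3 * 512 * b ^ 4, ?_, ?_⟩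
          · apply Odd.sub_even
            · exact hv5.mul hv3.pow
            · exact ⟨u2 * u4 ^ 3 * 256 * b ^ 4, by ring⟩
          · have : p (2 * j + 1 + 1) * p (2 * j + 1 + 3) ^ 3 * (4 * (4 * b) ^ 2) ^ 2 =
              (2 * p (2 * j + 1 + 1)) * (2 * p (2 * j + 1 + 3)) ^ 3 * (256 * b ^ 4) := by ring
            rw [this, e5, e3, e2, e4]
            ring
    · rcases k with _ | _ | k
      · exact ⟨1, by simp [p2]⟩
      · obtain ⟨u, h⟩ := p4
        exact ⟨u, by norm_num [h]; ring⟩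
      · rw [show 2 * (k + 1 + 1 + 1) = 2 * (k + 3) by ring, pe k]
        rcases Nat.even_or_odd' k with ⟨j, rfl | rfl⟩
        · obtain ⟨v1, hv1, e1⟩ := (ih j (by omega)).1
          obtain ⟨v3, hv3, e3⟩ := (ih (j + 1) (by omega)).1
          have e5 : ∃ v, p (2 * j + 5) = 2 ^ ((j + 2) ^ 2 + (j + 2)) * v := by
            rcases j with _ | j
            · have := po 0
              obtain ⟨v, hv, h3⟩ := p3
              obtain ⟨u, h4⟩ := p4
              norm_num [p1, p2, h4, h3] at this ⊢
              exact ⟨u * b ^ 4 * 512 - v ^ 3 * 1, by rw [this]; ring⟩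
            · obtain ⟨v, hv, e⟩ := (ih (j + 1 + 2) (by omega)).1
              exact ⟨v, by rw [← e]; congr 1⟩
          obtain ⟨v5, e5⟩ := e5
          obtain ⟨u2, e2⟩ := (ih j (by omega)).2
          obtain ⟨u4, e4⟩ := (ih (j + 1) (by omega)).2
          rw [show 2 * (j + 1) + 1 = 2 * j + 3 by ring] at e3
          rw [show 2 * (j + 1) = 2 * j + 2 by ring] at e2
          rw [show 2 * (j + 1 + 1) = 2 * j + 4 by ring] at e4
          refine ⟨u2 ^ 2 * v3 * v5 - v1 * v3 * u4 ^ 2, ?_⟩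
          apply mul_left_cancel₀ (two_ne_zero (α := ℤ))
          have : 2 * (2 * (p (2 * j + 2) ^ 2 * p (2 * j + 3) * p (2 * j + 5) -
              p (2 * j + 1) * p (2 * j + 3) * p (2 * j + 4) ^ 2)) =
              (2 * p (2 * j + 2)) ^ 2 * p (2 * j + 3) * p (2 * j + 5) -
              p (2 * j + 1) * p (2 * j + 3) * (2 * p (2 * j + 4)) ^ 2 := by ring
          rw [this, e1, e2, e3, e4, e5]
          ring
        · obtain ⟨v3, hv3, e3⟩ := (ih (j + 1) (by omega)).1
          obtain ⟨v5, hv5, e5⟩ := (ih (j + 2) (by omega)).1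
          obtain ⟨u2, e2⟩ := (ih j (by omega)).2
          obtain ⟨u4, e4⟩ := (ih (j + 1) (by omega)).2
          obtain ⟨u6, e6⟩ := (ih (j + 2) (by omega)).2
          rw [show 2 * (j + 1) + 1 = 2 * j + 1 + 2 by ring] at e3
          rw [show 2 * (j + 2) + 1 = 2 * j + 1 + 4 by ring] at e5
          rw [show 2 * (j + 1) = 2 * j + 1 + 1 by ring] at e2
          rw [show 2 * (j + 1 + 1) = 2 * j + 1 + 3 by ring] at e4
          rw [show 2 * (j + 2 + 1) = 2 * j + 1 + 5 by ring] at e6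
          refine ⟨v3 ^ 2 * u4 * u6 - u2 * u4 * v5 ^ 2, ?_⟩
          apply mul_left_cancel₀ (two_ne_zero (α := ℤ))
          have : 2 * (2 * (p (2 * j + 1 + 2) ^ 2 * p (2 * j + 1 + 3) * p (2 * j + 1 + 5) -
              p (2 * j + 1 + 1) * p (2 * j + 1 + 3) * p (2 * j + 1 + 4) ^ 2)) =
              p (2 * j + 1 + 2) ^ 2 * (2 * p (2 * j + 1 + 3)) * (2 * p (2 * j + 1 + 5)) -
              (2 * p (2 * j + 1 + 1)) * (2 * p (2 * j + 1 + 3)) * p (2 * j + 1 + 4) ^ 2 := by ring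
          rw [this, e2, e3, e4, e5, e6]
          ring

lemma psi_nonvanish (N : ℕ) (a b : ℤ)
    (h : (congruentCurve N).Nonsingular (a : ℚ) (b : ℚ))
    (hPtors : ∀ m : ℤ, 1 ≤ m →
      m • (WeierstrassCurve.Affine.Point.some _ _ h) ≠ 0)
    (p : ℕ → ℤ) (p1 : p 1 = 1) (p2 : p 2 = 1)
    (p3 : p 3 = 3 * a ^ 4 + 6 * (-(N : ℤ) ^ 2) * a ^ 2 - (-(N : ℤ) ^ 2) ^ 2)
    (p4 : p 4 = 2 * (a ^ 6 + 5 * (-(N : ℤ) ^ 2) * a ^ 4 - 5 * (-(N : ℤ) ^ 2) ^ 2 * a ^ 2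
      - (-(N : ℤ) ^ 2) ^ 3))
    (pe : ∀ m, p (2 * (m + 3)) = p (m + 2) ^ 2 * p (m + 3) * p (m + 5) -
      p (m + 1) * p (m + 3) * p (m + 4) ^ 2)
    (po : ∀ m, p (2 * (m + 2) + 1) =
      p (m + 4) * p (m + 2) ^ 3 * (if Even m then (4 * b ^ 2) ^ 2 else 1) -
      p (m + 1) * p (m + 3) ^ 3 * (if Even m then 1 else (4 * b ^ 2) ^ 2)) :
    b ≠ 0 ∧ ∀ n, p (n + 1) ≠ 0 := by
  set P := WeierstrassCurve.Affine.Point.some _ _ h with hP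
  have hne0 : ∀ n : ℕ, 1 ≤ n → n • P ≠ 0 := by
    intro n hn
    rw [← natCast_zsmul]
    exact hPtors n (by exact_mod_cast hn)
  have hy : (b : ℚ) ≠ 0 := by
    apply y_ne N a b h
    have := hne0 2 (by norm_num)
    rwa [two_nsmul] at this
  have e1 := (WeierstrassCurve.Affine.equation_iff _ _).1 h.1
  simp only [congruentCurve] at e1
  let x : ℕ → ℚ := fun n => ptX (n • P)
  have hx1 : x 1 = a := by simp only [x, one_nsmul]; rfl
  have hsum : ∀ n k : ℕ, (n + k) • P + n • P = (2 * n + k) • P := by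
    intro n k; rw [← add_nsmul]; congr 1; ring
  have hdif : ∀ n k : ℕ, (n + k) • P - n • P = k • P := by
    intro n k; rw [add_nsmul]; abel
  have hne : ∀ n k, 1 ≤ n → 1 ≤ k → x (n + k) ≠ x n := by
    intro n k hn hk
    apply ptX_ne _ _ (hne0 _ (by omega)) (hne0 _ hn)
    · rw [hsum]; exact hne0 _ (by omega)
    · rw [hdif]; exact hne0 _ hk
  have hb : ∀ n k, 1 ≤ n → 1 ≤ k → _ := fun n k hn hk =>
    ptX_add_sub N ((n + k) • P) (n • P) (hne0 _ (by omega)) (hne0 _ hn) (hne n k hn hk)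
  have key := wSeq_eq x b (-(N : ℚ) ^ 2) hy (by rw [hx1]; linear_combination e1)
    (by
      have := ptX_double N a b h hy
      rw [hx1]
      simp only [x, two_nsmul]
      exact this) hne
    (fun n k hn hk => by
      have := (hb n k hn hk).1
      rw [hsum, hdif] at this
      exact this)
    (fun n k hn hk => by
      have := (hb n k hn hk).2
      rw [hsum, hdif] at this
      exact this)
    (fun n => (p n : ℚ)) (by simp [p1]) (by simp [p2])
    (by rw [hx1]; exact_mod_cast p3) (by rw [hx1]; exact_mod_cast p4)
    (fun m => by exact_mod_cast pe m)
    (fun m => by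
      have := po m
      split_ifs at this ⊢
      · exact_mod_cast this
      · exact_mod_cast this)
  refine ⟨by exact_mod_cast hy, fun n hn => ?_⟩
  have := key n
  have h2 := wSeq_ne x b hy hne n
  simp only [hn, Int.cast_zero, zero_mul] at this
  exact h2 this

lemma sq_mod (a : ℤ) (h : Odd a) : ∃ s, a ^ 2 = 8 * s + 1 := by
  have := Int.sq_mod_four_eq_one_of_odd h
  obtain ⟨k, rfl⟩ := h
  rcases Int.even_or_odd' k with ⟨j, rfl | rfl⟩
  · exact ⟨2 * j ^ 2 + j, by ring⟩
  · exact ⟨2 * j ^ 2 + 3 * j + 1, by ring⟩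

lemma four_dvd (N a b : ℤ) (hN : Odd N) (ha : Odd a) (h : b ^ 2 = a ^ 3 - N ^ 2 * a) :
    ∃ c, b = 4 * c := by
  obtain ⟨s, hs⟩ := sq_mod a ha
  obtain ⟨t, ht⟩ := sq_mod N hN
  have h1 : b ^ 2 = 8 * (a * (s - t)) := by
    linear_combination h + a * hs - a * ht
  have e : Even b := by
    have : Even (b ^ 2) := ⟨4 * (a * (s - t)), by rw [h1]; ring⟩
    exact (Int.even_pow.1 this).1
  obtain ⟨c, rfl⟩ := e
  have e : Even c := by
    have : Even (c ^ 2) := ⟨a * (s - t), by linarith [h1, show (c + c) ^ 2 = 4 * c ^ 2 by ring]⟩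
    exact (Int.even_pow.1 this).1
  obtain ⟨d, rfl⟩ := e
  exact ⟨d, by ring⟩

lemma val_mul_odd (e : ℕ) (v : ℤ) (hv : Odd v) : padicValInt 2 (2 ^ e * v) = e := by
  have hv0 : v ≠ 0 := by rintro rfl; simp at hv
  rw [padicValInt.mul (by positivity) hv0]
  have h1 : padicValInt 2 v = 0 := by
    apply padicValInt.eq_zero_of_not_dvd
    intro h
    exact (Int.not_even_iff_odd.2 hv) (even_iff_two_dvd.2 (by exact_mod_cast h))
  have h2 : padicValInt 2 ((2 : ℤ) ^ e) = e := by
    simp [padicValInt, Int.natAbs_pow]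
  omega

theorem stmt5 (N : ℕ) (hN : 0 < N) (hNodd : Odd N)
    (a b : ℤ) (haodd : Odd a)
    (h : (congruentCurve N).Nonsingular (a : ℚ) (b : ℚ))
    (hPtors : ∀ m : ℤ, 1 ≤ m →
      m • (WeierstrassCurve.Affine.Point.some _ _ h) ≠ 0) :
    (∀ n : ℤ, 1 ≤ n → Odd n →
      (padicValInt 2 (psiEN N a b n) : ℤ) = (n ^ 2 - 1) / 4) ∧
    (∀ n : ℤ, 2 ≤ n → Even n →
      n ^ 2 / 4 + (padicValInt 2 b : ℤ) ≤ (padicValInt 2 (psiEN N a b n) : ℤ)) := by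

  set W := congruentCurveZ N with hW
  let p : ℕ → ℤ := fun n => (W.preΨ' n).eval a
  have e1 := (WeierstrassCurve.Affine.equation_iff _ _).1 h.1
  simp only [congruentCurve] at e1
  have hb2 : b ^ 2 = a ^ 3 - (N : ℤ) ^ 2 * a := by
    have : (b : ℚ) ^ 2 = a ^ 3 - (N : ℚ) ^ 2 * a := by linear_combination e1
    exact_mod_cast this
  have hpsq : W.Ψ₂Sq.eval a = 4 * b ^ 2 := by
    rw [hb2]
    simp [WeierstrassCurve.Ψ₂Sq, WeierstrassCurve.b₂, WeierstrassCurve.b₄, WeierstrassCurve.b₆, hW,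
      congruentCurveZ]
    ring
  have p1 : p 1 = 1 := by simp [p]
  have p2 : p 2 = 1 := by simp [p]
  have p3 : p 3 = 3 * a ^ 4 + 6 * (-(N : ℤ) ^ 2) * a ^ 2 - (-(N : ℤ) ^ 2) ^ 2 := by
    simp [p, WeierstrassCurve.Ψ₃, WeierstrassCurve.b₂, WeierstrassCurve.b₄, WeierstrassCurve.b₆,
      WeierstrassCurve.b₈, hW, congruentCurveZ]
    ring
  have p4 : p 4 = 2 * (a ^ 6 + 5 * (-(N : ℤ) ^ 2) * a ^ 4 - 5 * (-(N : ℤ) ^ 2) ^ 2 * a ^ 2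
      - (-(N : ℤ) ^ 2) ^ 3) := by
    simp [p, WeierstrassCurve.preΨ₄, WeierstrassCurve.b₂, WeierstrassCurve.b₄, WeierstrassCurve.b₆,
      WeierstrassCurve.b₈, hW, congruentCurveZ]
    ring
  have pe : ∀ m, p (2 * (m + 3)) = p (m + 2) ^ 2 * p (m + 3) * p (m + 5) -
      p (m + 1) * p (m + 3) * p (m + 4) ^ 2 := by
    intro m
    simp only [p, WeierstrassCurve.preΨ'_even]
    simp
  have po : ∀ m, p (2 * (m + 2) + 1) =
      p (m + 4) * p (m + 2) ^ 3 * (if Even m then (4 * b ^ 2) ^ 2 else 1) -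
      p (m + 1) * p (m + 3) ^ 3 * (if Even m then 1 else (4 * b ^ 2) ^ 2) := by
    intro m
    simp only [p, WeierstrassCurve.preΨ'_odd]
    split_ifs <;> simp [hpsq]
  have hpsi : ∀ n : ℕ, psiEN N a b n = p n * if Even n then 2 * b else 1 := by
    intro n
    simp only [psiEN, WeierstrassCurve.Ψ_ofNat, p, ← hW]
    rw [Polynomial.evalEval_mul, Polynomial.evalEval_C]
    congr 1
    split_ifs
    · rw [WeierstrassCurve.ψ₂, WeierstrassCurve.Affine.evalEval_polynomialY]
      simp [hW, congruentCurveZ]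
    · simp
  obtain ⟨hb0, hp0⟩ := psi_nonvanish N a b h hPtors p p1 p2 p3 p4 pe po
  have hNo : Odd (N : ℤ) := by exact_mod_cast hNodd
  obtain ⟨c, hc⟩ := four_dvd N a b hNo haodd hb2
  obtain ⟨s, hs⟩ := sq_mod a haodd
  obtain ⟨t, ht⟩ := sq_mod N hNo
  have hv := val_aux_s5 p c p1 p2
    ⟨48 * s ^ 2 - 96 * s * t - 16 * t ^ 2 - 16 * t - 1, ⟨24 * s ^ 2 - 48 * s * t - 8 * t ^ 2 - 8 * t - 1, by ring⟩, by
      rw [p3, show a ^ 4 = (a ^ 2) ^ 2 by ring, hs, ht]; ring⟩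
    (by
      have : ∃ u, a ^ 6 + 5 * (-(N : ℤ) ^ 2) * a ^ 4 - 5 * (-(N : ℤ) ^ 2) ^ 2 * a ^ 2
      - (-(N : ℤ) ^ 2) ^ 3 = 4 * u := by
        refine ⟨(4 * s + 4 * t + 1) * (32 * (s - t) ^ 2 - 2 * (8 * s + 1) * (8 * t + 1)), ?_⟩
        rw [show a ^ 4 = (a ^ 2) ^ 2 by ring, show a ^ 6 = (a ^ 2) ^ 3 by ring, hs, ht]; ring
      obtain ⟨u, hu⟩ := this
      exact ⟨u, by rw [p4, hu]; ring⟩)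
    pe (by rw [← hc]; exact po)
  constructor
  · intro n hn1 hodd
    obtain ⟨k, hk⟩ := hodd
    lift k to ℕ using by omega
    obtain ⟨v, hvo, e⟩ := (hv k).1
    have hn : n = ((2 * k + 1 : ℕ) : ℤ) := by push_cast; exact hk
    rw [hn, hpsi, if_neg (by simp), mul_one, e, val_mul_odd _ _ hvo]
    push_cast
    rw [show ((2 * (k : ℤ) + 1) ^ 2 - 1) = 4 * (k ^ 2 + k) by ring]
    simp
  · intro n hn2 heven
    obtain ⟨k, hk⟩ := heven
    obtain ⟨j, rfl⟩ : ∃ j : ℕ, k = j + 1 := ⟨(k - 1).toNat, by omega⟩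
    obtain ⟨u, e⟩ := (hv j).2
    have hn : n = ((2 * (j + 1) : ℕ) : ℤ) := by push_cast; linarith
    have hpne : p (2 * (j + 1)) ≠ 0 := hp0 (2 * j + 1)
    rw [hn, hpsi, if_pos (by simp)]
    rw [show p (2 * (j + 1)) * (2 * b) = (2 * p (2 * (j + 1))) * b by ring]
    have h2 : 2 * p (2 * (j + 1)) ≠ 0 := mul_ne_zero two_ne_zero hpne
    rw [padicValInt.mul h2 hb0]
    have h3 : (j + 1) ^ 2 ≤ padicValInt 2 (2 * p (2 * (j + 1))) := by
      have hd : ((2 : ℕ) : ℤ) ^ ((j + 1) ^ 2) ∣ 2 * p (2 * (j + 1)) := ⟨u, by rw [e]; norm_num⟩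
      exact ((padicValInt_dvd_iff _ _).1 hd).resolve_left h2
    push_cast
    rw [show (2 * ((j : ℤ) + 1)) ^ 2 = 4 * ((j + 1) ^ 2) by ring]
    have : ((j : ℤ) + 1) ^ 2 ≤ (padicValInt 2 (2 * p (2 * (j + 1))) : ℤ) := by exact_mod_cast h3
    omega
end
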